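/- arXiv:1807.10743 — 10 statements merged into one kernel-verified Lean document; each statement's English description precedes it below -/
import Mathlib

section
/- Let m ≥ 1 and let R be a commutative ring in which (m−1)! is invertible. If B ∈ Mat_m(R) has characteristic polynomial (X−1)^m, then the truncated logarithm log(B) = ∑_{i=1}^{m−1} (−1)^{i+1} (B−1)^i/i has characteristic polynomial X^m. -/
open Polynomial

/-- The truncated logarithm of a matrix: `log(B) = ∑_{i=1}^{m-1} (-1)^{i+1} (B-1)^i / i`. -/
noncomputable def truncLog {R : Type*} [CommRing R] {m : ℕ}
    (B : Matrix (Fin m) (Fin m) R) : Matrix (Fin m) (Fin m) R :=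
  ∑ i ∈ Finset.Ico 1 m, ((-1 : R) ^ (i + 1) * Ring.inverse ((i : R))) • (B - 1) ^ i

/-!
The characteristic polynomial of `p(M)` depends only on `p` and on the characteristic polynomial
of `M`. It is a determinant `det q(M)` over `R[X]`; changing `q` by a multiple of the
characteristic polynomial of `M` makes `q` monic without changing `q(M)`, and after a ring
extension a monic `q` is a product of linear factors `X + a`, for which `det (M + a)` is up to sign
a value of the characteristic polynomial of `M`. Since `B` has the characteristic polynomial of the
identity matrix, `log B` has that of `log 1 = 0`.
-/

theorem aeval_matrix_map {R S n : Type*} [CommSemiring R] [CommSemiring S] [Algebra R S]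
    [Fintype n] [DecidableEq n] (M : Matrix n n R) (p : R[X]) :
    aeval (M.map (algebraMap R S)) (p.map (algebraMap R S)) =
      (aeval M p).map (algebraMap R S) := by
  rw [aeval_map_algebraMap]
  exact aeval_algHom_apply (Algebra.ofId R S).mapMatrix M p

section CharpolyAeval

variable {R n : Type*} [CommRing R] [Fintype n] [DecidableEq n] {M N : Matrix n n R}

theorem det_add_scalar (M : Matrix n n R) (a : R) :
    (M + Matrix.scalar n a).det = (-1) ^ Fintype.card n * M.charpoly.eval (-a) := by
  rw [Matrix.eval_charpoly, ← Matrix.det_neg, map_neg, neg_sub, sub_neg_eq_add]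

theorem det_aeval_eq_of_splits (h : M.charpoly = N.charpoly) {q : R[X]} (hq : q.Splits) :
    (aeval M q).det = (aeval N q).det := by
  induction hq using Submonoid.closure_induction with
  | mem x hx =>
    rcases hx with ⟨a, rfl⟩ | ⟨a, rfl⟩
    · simp only [aeval_C, Matrix.algebraMap_eq_diagonal]
    · have aeval_X_add_C (A : Matrix n n R) : aeval A (X + C a) = A + Matrix.scalar n a := by
        rw [map_add, aeval_X, aeval_C, Matrix.algebraMap_eq_diagonal]
        rfl
      rw [aeval_X_add_C, aeval_X_add_C, det_add_scalar, det_add_scalar, h]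
  | one => simp only [map_one]
  | mul x y _ _ hx hy => rw [map_mul, map_mul, Matrix.det_mul, Matrix.det_mul, hx, hy]

theorem det_aeval_eq_of_monic (h : M.charpoly = N.charpoly) {q : R[X]} (hq : q.Monic) :
    (aeval M q).det = (aeval N q).det := by
  nontriviality R
  obtain ⟨S, _, _, _, _, _, hqS⟩ := hq.exists_splits_map
  have h_map : (M.map (algebraMap R S)).charpoly = (N.map (algebraMap R S)).charpoly := by
    rw [Matrix.charpoly_map, Matrix.charpoly_map, h]
  have h_det := det_aeval_eq_of_splits h_map hqS
  rw [aeval_matrix_map, aeval_matrix_map] at h_det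
  apply FaithfulSMul.algebraMap_injective R S
  rwa [RingHom.map_det, RingHom.map_det]

theorem det_aeval_eq_of_charpoly_eq (h : M.charpoly = N.charpoly) (q : R[X]) :
    (aeval M q).det = (aeval N q).det := by
  nontriviality R
  set r : R[X] := M.charpoly * X ^ (q.natDegree + 1) + q
  have hr : r.Monic := by
    refine (M.charpoly_monic.mul (monic_X_pow _)).add_of_left (degree_lt_degree ?_)
    rw [M.charpoly_monic.natDegree_mul (monic_X_pow _), natDegree_X_pow]
    lia
  have hM : aeval M r = aeval M q := by simp [r, Matrix.aeval_self_charpoly]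
  have hN : aeval N r = aeval N q := by simp [r, h, Matrix.aeval_self_charpoly]
  rw [← hM, ← hN, det_aeval_eq_of_monic h hr]

theorem charmatrix_aeval (M : Matrix n n R) (p : R[X]) :
    (aeval M p).charmatrix = aeval (M.map C) (C X - p.map C) := by
  rw [map_sub, aeval_C, Matrix.algebraMap_eq_diagonal, ← algebraMap_eq, aeval_matrix_map]
  rfl

theorem charpoly_aeval_eq_of_charpoly_eq (h : M.charpoly = N.charpoly) (p : R[X]) :
    (aeval M p).charpoly = (aeval N p).charpoly := by
  have h_map : (M.map (C : R →+* R[X])).charpoly = (N.map C).charpoly := by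
    rw [Matrix.charpoly_map, Matrix.charpoly_map, h]
  rw [Matrix.charpoly, Matrix.charpoly, charmatrix_aeval, charmatrix_aeval]
  exact det_aeval_eq_of_charpoly_eq h_map _

end CharpolyAeval

/-- The degree-`(m - 1)` Taylor polynomial at `1` of the logarithm, whose value at an `m × m`
matrix is the truncated logarithm. As in `truncLog`, the coefficient `1 / i` is `Ring.inverse i`,
which is `0` when `i` is not invertible in `R`. -/
noncomputable def truncLogPoly (R : Type*) [CommRing R] (m : ℕ) : R[X] :=
  ∑ i ∈ Finset.Ico 1 m, ((-1 : R) ^ (i + 1) * Ring.inverse (i : R)) • (X - 1) ^ i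

theorem aeval_truncLogPoly {R : Type*} [CommRing R] {m : ℕ}
    (B : Matrix (Fin m) (Fin m) R) :
    aeval B (truncLogPoly R m) = truncLog B := by
  simp only [truncLogPoly, truncLog, map_sum, map_smul, map_pow, map_sub, aeval_X, map_one]

theorem truncLog_one (R : Type*) [CommRing R] (m : ℕ) :
    truncLog (1 : Matrix (Fin m) (Fin m) R) = 0 := by
  refine Finset.sum_eq_zero fun i hi ↦ ?_
  rw [sub_self, zero_pow (Nat.one_le_iff_ne_zero.mp (Finset.mem_Ico.mp hi).1), smul_zero]

/-- Let `m ≥ 1` and let `R` be a commutative ring in which `(m−1)!` is invertible.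
If `B ∈ Mat_m(R)` has characteristic polynomial `(X−1)^m`, then the truncated logarithm
`log(B) = ∑_{i=1}^{m−1} (−1)^{i+1} (B−1)^i/i` has characteristic polynomial `X^m`. -/
theorem charpoly_truncLog {R : Type*} [CommRing R] {m : ℕ} (hm : 1 ≤ m)
    (hfac : IsUnit (((m - 1).factorial : R)))
    (B : Matrix (Fin m) (Fin m) R) (hB : B.charpoly = (X - 1) ^ m) :
    (truncLog B).charpoly = X ^ m := by
  have hB_one : B.charpoly = (1 : Matrix (Fin m) (Fin m) R).charpoly := by
    rw [hB, Matrix.charpoly_one, Fintype.card_fin]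
  calc
    (truncLog B).charpoly = (aeval B (truncLogPoly R m)).charpoly := by rw [aeval_truncLogPoly]
    _ = (aeval (1 : Matrix (Fin m) (Fin m) R) (truncLogPoly R m)).charpoly :=
      charpoly_aeval_eq_of_charpoly_eq hB_one _
    _ = (0 : Matrix (Fin m) (Fin m) R).charpoly := by rw [aeval_truncLogPoly, truncLog_one]
    _ = X ^ m := by rw [Matrix.charpoly_zero, Fintype.card_fin]
end

section
/- Let m ≥ 1 and let R be a commutative ring in which (m−1)! is invertible. If B ∈ Mat_m(R) has characteristic polynomial (X−1)^m, then exp(log(B)) = B, where exp and log denote the truncated exponential and logarithm. -/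
/-!
Formally, `f = exp(log(1 + X))` satisfies `(1 + X) f' = f` and `f(0) = 1`, which forces `f = 1 + X`.
For the truncated series this differential equation holds modulo `X ^ (m - 1)`, and since `(m - 1)!`
is invertible it still determines `f` modulo `X ^ m`. By the Cayley–Hamilton theorem
`(B - 1) ^ m = 0`, so the congruence may be evaluated at `X = B - 1`.
-/

open Polynomial

/-- The truncated exponential of a matrix: `exp(A) = ∑_{i=0}^{m-1} A^i / i!`. -/
noncomputable def truncExp {R : Type*} [CommRing R] {m : ℕ}
    (A : Matrix (Fin m) (Fin m) R) : Matrix (Fin m) (Fin m) R :=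
  ∑ i ∈ Finset.range m, (Ring.inverse ((i.factorial : R))) • A ^ i

section Polynomials

variable {R : Type*}

theorem isUnit_natCast_of_isUnit_factorial [CommSemiring R] {k n : ℕ}
    (hfac : IsUnit (n.factorial : R)) (hk : 0 < k) (hkn : k ≤ n) : IsUnit (k : R) :=
  isUnit_of_dvd_unit (Nat.cast_dvd_cast (Nat.dvd_factorial hk hkn)) hfac

theorem inverse_factorial_succ_mul [CommSemiring R] {k : ℕ}
    (hfac : IsUnit ((k + 1).factorial : R)) :
    Ring.inverse ((k + 1).factorial : R) * ((k + 1 : ℕ) : R) =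
      Ring.inverse (k.factorial : R) := by
  have hk : IsUnit ((k + 1 : ℕ) : R) :=
    isUnit_natCast_of_isUnit_factorial hfac k.succ_pos le_rfl
  rw [Nat.factorial_succ, Nat.cast_mul, Ring.inverse_mul (.inl hk),
    Ring.inverse_mul_cancel_right _ _ hk]

theorem X_pow_succ_dvd_of_X_pow_dvd_derivative [CommSemiring R] {n : ℕ}
    (hfac : IsUnit (n.factorial : R)) {p : R[X]} (hp : X ∣ p) (hp' : X ^ n ∣ derivative p) :
    X ^ (n + 1) ∣ p := by
  rw [X_pow_dvd_iff] at hp' ⊢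
  rintro (_ | k) hk
  · exact X_dvd_iff.mp hp
  · have hkn : k < n := Nat.lt_of_succ_lt_succ hk
    have hcoeff : p.coeff (k + 1) * ((k + 1 : ℕ) : R) = 0 := by
      simpa only [coeff_derivative, Nat.cast_add_one] using hp' k hkn
    exact (isUnit_natCast_of_isUnit_factorial hfac k.succ_pos hkn).mul_left_eq_zero.mp hcoeff

/- Each power of `X` dividing `p` also divides `p'` by the differential equation, and integrating
gains one more power. -/
theorem X_pow_succ_dvd_of_X_pow_dvd_mul_derivative_sub [CommRing R] {n : ℕ}
    (hfac : IsUnit (n.factorial : R)) {a b p : R[X]} (ha : IsCoprime X a) (hp : X ∣ p)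
    (hode : X ^ n ∣ a * derivative p - b * p) : X ^ (n + 1) ∣ p := by
  induction n with
  | zero => simpa using hp
  | succ n ih =>
    have hdvd : X ^ (n + 1) ∣ p :=
      ih (hfac.natCast_factorial_of_le n.le_succ) ((pow_dvd_pow X n.le_succ).trans hode)
    have hmul : X ^ (n + 1) ∣ a * derivative p :=
      (dvd_sub_left (hdvd.mul_left b)).mp hode
    exact X_pow_succ_dvd_of_X_pow_dvd_derivative hfac hp (ha.pow_left.dvd_of_dvd_mul_left hmul)

variable [CommRing R]

variable (R) in
/-- The exponential series `∑ X ^ i / i!`, truncated to degree less than `m`. Inverses are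
`Ring.inverse`, hence meaningful only when `(m - 1)!` is a unit. -/
noncomputable def truncExpPoly (m : ℕ) : R[X] :=
  ∑ i ∈ Finset.range m, C (Ring.inverse (i.factorial : R)) * X ^ i

variable (R) in
/-- The series `∑ (-1) ^ (i + 1) X ^ i / i` of `log (1 + X)`, truncated to degree less than `m`,
so that the logarithm of `b` is its value at `b - 1`. Inverses are `Ring.inverse`, hence meaningful
only when `(m - 1)!` is a unit. -/
noncomputable def truncLogOneAddPoly (m : ℕ) : R[X] :=
  ∑ i ∈ Finset.Ico 1 m, C ((-1 : R) ^ (i + 1) * Ring.inverse (i : R)) * X ^ i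

theorem truncExpPoly_succ (n : ℕ) :
    truncExpPoly R (n + 1) =
      truncExpPoly R n + C (Ring.inverse (n.factorial : R)) * X ^ n :=
  Finset.sum_range_succ _ n

theorem X_dvd_truncExpPoly_succ_sub_one (n : ℕ) : X ∣ truncExpPoly R (n + 1) - 1 := by
  simp [X_dvd_iff, truncExpPoly, Finset.sum_range_succ', coeff_X_pow]

theorem X_dvd_truncLogOneAddPoly (m : ℕ) : X ∣ truncLogOneAddPoly R m :=
  Finset.dvd_sum fun _ hi =>
    (dvd_pow_self X (Nat.one_le_iff_ne_zero.mp (Finset.mem_Ico.mp hi).1)).mul_left _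

theorem derivative_truncExpPoly_succ {n : ℕ} (hfac : IsUnit (n.factorial : R)) :
    derivative (truncExpPoly R (n + 1)) = truncExpPoly R n := by
  rw [truncExpPoly, Finset.sum_range_succ', derivative_add, derivative_sum]
  simp only [pow_zero, mul_one, derivative_C, add_zero]
  refine Finset.sum_congr rfl fun i hi => ?_
  rw [derivative_C_mul_X_pow, Nat.add_sub_cancel, inverse_factorial_succ_mul
    (hfac.natCast_factorial_of_le (Finset.mem_range.mp hi))]

theorem derivative_truncLogOneAddPoly_succ {n : ℕ} (hfac : IsUnit (n.factorial : R)) :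
    derivative (truncLogOneAddPoly R (n + 1)) = ∑ i ∈ Finset.range n, (-X) ^ i := by
  rw [truncLogOneAddPoly, Finset.sum_Ico_eq_sum_range, Nat.add_sub_cancel, derivative_sum]
  refine Finset.sum_congr rfl fun i hi => ?_
  have hunit : IsUnit ((1 + i : ℕ) : R) :=
    isUnit_natCast_of_isUnit_factorial hfac (by lia) (by grind)
  rw [derivative_C_mul_X_pow, Ring.inverse_mul_cancel_right _ _ hunit, Nat.add_sub_cancel_left,
    neg_pow (X : R[X])]
  simp [pow_add]

theorem one_add_X_mul_derivative_truncLogOneAddPoly_succ {n : ℕ}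
    (hfac : IsUnit (n.factorial : R)) :
    (1 + X) * derivative (truncLogOneAddPoly R (n + 1)) = 1 - (-X) ^ n := by
  rw [derivative_truncLogOneAddPoly_succ hfac, ← sub_neg_eq_add, mul_neg_geom_sum]

theorem X_pow_dvd_one_add_X_mul_derivative_truncExpPoly_comp_sub {n : ℕ}
    (hfac : IsUnit (n.factorial : R)) :
    X ^ n ∣ (1 + X) *
        derivative ((truncExpPoly R (n + 1)).comp (truncLogOneAddPoly R (n + 1))) -
      (truncExpPoly R (n + 1)).comp (truncLogOneAddPoly R (n + 1)) := by
  set L := truncLogOneAddPoly R (n + 1)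
  set E := (truncExpPoly R n).comp L
  set c := C (Ring.inverse (n.factorial : R))
  have hcomp : (truncExpPoly R (n + 1)).comp L = E + c * L ^ n := by
    simp only [truncExpPoly_succ, add_comp, mul_comp, C_comp, X_pow_comp, E, c]
  have herror : (1 + X) * derivative ((truncExpPoly R (n + 1)).comp L) -
      (truncExpPoly R (n + 1)).comp L = -((-X) ^ n * E + c * L ^ n) := by
    rw [derivative_comp, derivative_truncExpPoly_succ hfac, hcomp]
    linear_combination E * one_add_X_mul_derivative_truncLogOneAddPoly_succ hfac
  rw [herror, dvd_neg]
  exact dvd_add ((pow_dvd_pow_of_dvd (dvd_neg.mpr dvd_rfl) n).mul_right E)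
    ((pow_dvd_pow_of_dvd (X_dvd_truncLogOneAddPoly (n + 1)) n).mul_left c)

theorem X_pow_dvd_truncExpPoly_comp_truncLogOneAddPoly_sub {m : ℕ}
    (hfac : IsUnit ((m - 1).factorial : R)) :
    X ^ m ∣ (truncExpPoly R m).comp (truncLogOneAddPoly R m) - (1 + X) := by
  obtain _ | n := m
  · simp only [pow_zero, one_dvd]
  rw [Nat.add_sub_cancel] at hfac
  set F := (truncExpPoly R (n + 1)).comp (truncLogOneAddPoly R (n + 1)) with hF
  have hconst : X ∣ F - (1 + X) := by
    have hsub_one : truncLogOneAddPoly R (n + 1) ∣ F - 1 := by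
      simpa [hF] using _root_.map_dvd (compRingHom (truncLogOneAddPoly R (n + 1)))
        (X_dvd_truncExpPoly_succ_sub_one (R := R) n)
    rw [← sub_sub]
    exact dvd_sub ((X_dvd_truncLogOneAddPoly (n + 1)).trans hsub_one) dvd_rfl
  have hode : X ^ n ∣ (1 + X) * derivative (F - (1 + X)) - 1 * (F - (1 + X)) := by
    convert X_pow_dvd_one_add_X_mul_derivative_truncExpPoly_comp_sub hfac using 1
    simp only [derivative_sub, derivative_add, derivative_one, derivative_X]
    ring
  have hcoprime : IsCoprime (X : R[X]) (1 + X) := ⟨-1, 1, by ring⟩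
  exact X_pow_succ_dvd_of_X_pow_dvd_mul_derivative_sub hfac hcoprime hconst hode

end Polynomials

theorem truncExp_eq_aeval_truncExpPoly {R : Type*} [CommRing R] {m : ℕ}
    (A : Matrix (Fin m) (Fin m) R) : truncExp A = aeval A (truncExpPoly R m) := by
  simp [truncExp, truncExpPoly, Algebra.smul_def]

theorem truncLog_eq_aeval_truncLogOneAddPoly {R : Type*} [CommRing R] {m : ℕ}
    (B : Matrix (Fin m) (Fin m) R) :
    truncLog B = aeval (B - 1) (truncLogOneAddPoly R m) := by
  simp [truncLog, truncLogOneAddPoly, Algebra.smul_def]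

theorem sub_one_pow_eq_zero_of_charpoly_eq {R n : Type*} [CommRing R] [Fintype n] [DecidableEq n]
    {B : Matrix n n R} {k : ℕ} (hB : B.charpoly = (X - 1) ^ k) : (B - 1) ^ k = 0 := by
  simpa [hB] using B.aeval_self_charpoly

theorem truncExp_truncLog_general {R A : Type*} [CommRing R] [Ring A] [Algebra R A] {m : ℕ}
    (hfac : IsUnit ((m - 1).factorial : R)) (b : A) (hb : (b - 1) ^ m = 0) :
    aeval (aeval (b - 1) (truncLogOneAddPoly R m)) (truncExpPoly R m) = b := by
  have hdvd := _root_.map_dvd (aeval (R := R) (b - 1))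
    (X_pow_dvd_truncExpPoly_comp_truncLogOneAddPoly_sub hfac)
  simpa [hb, aeval_comp, sub_eq_zero] using hdvd

/-- Let `m ≥ 1` and let `R` be a commutative ring in which `(m−1)!` is invertible.
If `B ∈ Mat_m(R)` has characteristic polynomial `(X−1)^m`, then `exp(log(B)) = B`, where
`exp` and `log` denote the truncated exponential and logarithm. -/
theorem truncExp_truncLog {R : Type*} [CommRing R] {m : ℕ} (hm : 1 ≤ m)
    (hfac : IsUnit (((m - 1).factorial : R)))
    (B : Matrix (Fin m) (Fin m) R) (hB : B.charpoly = (X - 1) ^ m) :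
    truncExp (truncLog B) = B := by
  rw [truncLog_eq_aeval_truncLogOneAddPoly, truncExp_eq_aeval_truncExpPoly]
  exact truncExp_truncLog_general hfac B (sub_one_pow_eq_zero_of_charpoly_eq hB)
end

section
/- Let m ≥ 1 and let R be a commutative ring in which (m−1)! is invertible. If A ∈ Mat_m(R) has characteristic polynomial X^m, then for every natural number q one has exp(q·A) = exp(A)^q, where exp denotes the truncated exponential. -/
open Polynomial

/-!
If `x` and `y` commute and every monomial `x ^ i * y ^ j` of total degree at least `n` vanishes,
then truncating the exponential series at degree `n` loses nothing in the product of the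
exponentials of `x` and `y`, so the binomial theorem gives the usual addition formula. When
`a ^ n = 0` this applies to `x = q • a` and `y = a`, and induction on `q` gives the `q`-th power.
By Cayley–Hamilton, a matrix with characteristic polynomial `X ^ m` satisfies `A ^ m = 0`.
-/

open Finset
open scoped Nat

theorem sum_range_mul_sum_range_eq_sum_antidiagonal {S : Type*} [NonUnitalNonAssocSemiring S]
    {n : ℕ} {f g : ℕ → S} (hfg : ∀ i j, n ≤ i + j → f i * g j = 0) :
    (∑ i ∈ range n, f i) * ∑ j ∈ range n, g j =
      ∑ d ∈ range n, ∑ p ∈ antidiagonal d, f p.1 * g p.2 := by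
  have extend_inner (i : ℕ) :
      ∑ j ∈ range (n - i), f i * g j = ∑ j ∈ range n, f i * g j :=
    sum_subset (range_mono (n.sub_le i)) fun j _ hj ↦
      hfg i j (Nat.sub_le_iff_le_add'.mp (not_lt.mp (mt mem_range.mpr hj)))
  simp_rw [Nat.sum_antidiagonal_eq_sum_range_succ (fun i j ↦ f i * g j),
    sum_range_diag_flip n (fun i j ↦ f i * g j), extend_inner, sum_mul_sum]

section TruncatedExponential

variable {S : Type*} (R : Type*) [CommSemiring R] [Semiring S] [Algebra R S]

/-- The divided power `a ^ n / n!` in an `R`-algebra, the `n`-th term of the exponential series.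
The inverse of `n!` is taken in `R`, and the value is `0` if `n!` is not invertible in `R`. -/
noncomputable def dividedPow (n : ℕ) (a : S) : S :=
  Ring.inverse (n ! : R) • a ^ n

/-- The exponential series in an `R`-algebra, truncated to its first `n` terms: `truncExp` for
arbitrary algebras, with the order of truncation as a parameter. -/
noncomputable def expTrunc (n : ℕ) (a : S) : S :=
  ∑ i ∈ range n, dividedPow R i a

variable {R}

theorem dividedPow_add_of_commute {n : ℕ} (hn : IsUnit (n ! : R)) {a b : S} (hab : Commute a b) :
    dividedPow R n (a + b) =
      ∑ p ∈ antidiagonal n, dividedPow R p.1 a * dividedPow R p.2 b := by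
  rw [dividedPow, hab.add_pow', smul_sum]
  refine sum_congr rfl fun p hp ↦ ?_
  have inverse_mul_choose : Ring.inverse (n ! : R) * (n.choose p.1 : R) =
      Ring.inverse (p.1 ! : R) * Ring.inverse (p.2 ! : R) := by
    rw [Nat.castChoose_eq hn hp, mul_assoc, Ring.inverse_mul_cancel_left _ _ hn]
  rw [← Nat.cast_smul_eq_nsmul R, smul_smul, inverse_mul_choose, ← smul_mul_smul_comm,
    dividedPow, dividedPow]

theorem dividedPow_mul_dividedPow_eq_zero {i j : ℕ} {a b : S} (h : a ^ i * b ^ j = 0) :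
    dividedPow R i a * dividedPow R j b = 0 := by
  rw [dividedPow, dividedPow, smul_mul_smul_comm, h, smul_zero]

theorem expTrunc_zero {n : ℕ} (hn : n ≠ 0) : expTrunc R n (0 : S) = 1 := by
  rw [expTrunc, sum_eq_single_of_mem 0 (mem_range.mpr (Nat.pos_of_ne_zero hn))
    fun i _ hi ↦ by rw [dividedPow, zero_pow hi, smul_zero]]
  simp [dividedPow]

theorem expTrunc_add_of_commute {n : ℕ} (hn : IsUnit ((n - 1)! : R)) {a b : S}
    (hab : Commute a b) (hzero : ∀ i j, n ≤ i + j → a ^ i * b ^ j = 0) :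
    expTrunc R n (a + b) = expTrunc R n a * expTrunc R n b :=
  calc expTrunc R n (a + b)
    _ = ∑ d ∈ range n, ∑ p ∈ antidiagonal d, dividedPow R p.1 a * dividedPow R p.2 b :=
      sum_congr rfl fun _ hd ↦
        dividedPow_add_of_commute (hn.natCast_factorial_of_lt (mem_range.mp hd)) hab
    _ = expTrunc R n a * expTrunc R n b :=
      (sum_range_mul_sum_range_eq_sum_antidiagonal fun i j hij ↦
        dividedPow_mul_dividedPow_eq_zero (hzero i j hij)).symm

theorem truncExp_nsmul_general {n : ℕ} (hn : IsUnit ((n - 1)! : R)) {a : S} (ha : a ^ n = 0)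
    (q : ℕ) : expTrunc R n (q • a) = expTrunc R n a ^ q := by
  rcases eq_or_ne n 0 with rfl | hn₀
  · have : Subsingleton S := subsingleton_of_zero_eq_one (by rw [← ha, pow_zero])
    exact Subsingleton.elim _ _
  have hzero (q i j : ℕ) (hij : n ≤ i + j) : (q • a) ^ i * a ^ j = 0 := by
    rw [_root_.smul_pow, smul_mul_assoc, ← pow_add, pow_eq_zero_of_le hij ha, smul_zero]
  induction q with
  | zero => rw [zero_nsmul, expTrunc_zero hn₀, pow_zero]
  | succ q ih =>
    rw [succ_nsmul, expTrunc_add_of_commute hn ((Commute.refl a).smul_left q) (hzero q), ih,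
      pow_succ]

end TruncatedExponential

theorem truncExp_eq_expTrunc {R : Type*} [CommRing R] {m : ℕ} (A : Matrix (Fin m) (Fin m) R) :
    truncExp A = expTrunc R m A :=
  rfl

theorem pow_eq_zero_of_charpoly_eq_X_pow {R ι : Type*} [CommRing R] [Fintype ι] [DecidableEq ι]
    {A : Matrix ι ι R} {k : ℕ} (hA : A.charpoly = X ^ k) : A ^ k = 0 := by
  simpa only [hA, map_pow, aeval_X] using A.aeval_self_charpoly

/-- Let `m ≥ 1` and let `R` be a commutative ring in which `(m−1)!` is invertible.
If `A ∈ Mat_m(R)` has characteristic polynomial `X^m`, then for every natural number `q`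
one has `exp(q·A) = exp(A)^q`, where `exp` denotes the truncated exponential. -/
theorem truncExp_nsmul {R : Type*} [CommRing R] {m : ℕ} (hm : 1 ≤ m)
    (hfac : IsUnit (((m - 1).factorial : R)))
    (A : Matrix (Fin m) (Fin m) R) (hA : A.charpoly = X ^ m) (q : ℕ) :
    truncExp (q • A) = (truncExp A) ^ q := by
  rw [truncExp_eq_expTrunc, truncExp_eq_expTrunc]
  exact truncExp_nsmul_general hfac (pow_eq_zero_of_charpoly_eq_X_pow hA) q
end

section
/- Let R be a commutative Artinian local ring with maximal ideal 𝔪 and residue field k = R/𝔪, and let Λ be a finite group. Let M and M′ be finitely generated R[Λ]-modules such that the reductions M/𝔪M and M′/𝔪M′ are non-isomorphic simple (irreducible) k[Λ]-modules. Then Hom_{R[Λ]}(M, M′) = 0. -/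
/-!
Write `IM'` for `I.map (algebraMap R A) • ⊤`. Elements of `R` act on an `A`-module by `A`-linear
maps, so `Iⁿ⁺¹M' / Iⁿ⁺²M'` is a sum of images of `IⁿM' / Iⁿ⁺¹M'`; hence if `M' / IM'` is simple,
every layer of the filtration of `M'` by the `IⁿM'` is isotypic of type `M' / IM'`. A map
`f : M → M'` with image in `IⁿM'` induces a map from `M / IM` to the `n`-th layer, which vanishes
by Schur's lemma when `M / IM` is simple and not isomorphic to `M' / IM'`. Hence the image of `f`
lies in `⨅ n, IⁿM'`, which is zero when `I` is nilpotent.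
-/

section IdealMap

open scoped Pointwise

variable {R A : Type*} [CommRing R] [Ring A] [Algebra R A]

lemma map_algebraMap_isTwoSided (I : Ideal R) : (I.map (algebraMap R A)).IsTwoSided where
  mul_mem_of_left b ha := by
    induction ha using Submodule.span_induction with
    | mem c hc =>
      obtain ⟨r, hr, rfl⟩ := hc
      rw [Algebra.commutes]
      exact Ideal.mul_mem_left _ b (Ideal.mem_map_of_mem _ hr)
    | zero => simp
    | add x y _ _ hx hy => rw [add_mul]; exact add_mem hx hy
    | smul c x _ hx => rw [smul_mul_assoc]; exact Submodule.smul_mem _ c hx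

lemma map_algebraMap_mul (I K : Ideal R) :
    (I * K).map (algebraMap R A) = I.map (algebraMap R A) * K.map (algebraMap R A) := by
  have : (Ideal.span (algebraMap R A '' I)).IsTwoSided := map_algebraMap_isTwoSided I
  calc (I * K).map (algebraMap R A)
    _ = (Ideal.span ((I : Set R) * (K : Set R))).map (algebraMap R A) := by
      rw [← Ideal.span_mul_span', Ideal.span_eq, Ideal.span_eq]
    _ = Ideal.span (algebraMap R A '' I * algebraMap R A '' K) := by
      rw [Ideal.map_span, Set.image_mul]
    _ = I.map (algebraMap R A) * K.map (algebraMap R A) :=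
      (Ideal.span_mul_span' _ _).symm

lemma map_algebraMap_smul_le_iff {M : Type*} [AddCommGroup M] [Module A M] {I : Ideal R}
    {N P : Submodule A M} :
    I.map (algebraMap R A) • N ≤ P ↔ ∀ r ∈ I, ∀ x ∈ N, algebraMap R A r • x ∈ P := by
  refine ⟨fun h r hr x hx ↦ h (Submodule.smul_mem_smul (Ideal.mem_map_of_mem _ hr) hx),
    fun h ↦ Submodule.smul_le.2 fun a ha x hx ↦ ?_⟩
  induction ha using Submodule.span_induction with
  | mem c hc => obtain ⟨r, hr, rfl⟩ := hc; exact h r hr x hx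
  | zero => simp
  | add a b _ _ ha hb => rw [add_smul]; exact add_mem ha hb
  | smul b a _ ha => rw [smul_assoc]; exact P.smul_mem b ha

end IdealMap

section Isotypic

variable {A S T M M' : Type*} [Ring A] [AddCommGroup S] [AddCommGroup T] [AddCommGroup M]
  [AddCommGroup M'] [Module A S] [Module A T] [Module A M] [Module A M']

lemma eq_zero_of_range_le_isotypicComponent [IsSimpleModule A S] [IsSimpleModule A T]
    (hST : IsEmpty (S ≃ₗ[A] T)) {f : S →ₗ[A] M}
    (hf : LinearMap.range f ≤ isotypicComponent A M T) : f = 0 := by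
  refine f.injective_or_eq_zero.resolve_left fun hinj ↦ ?_
  let e := LinearEquiv.ofInjective f hinj
  have : IsSimpleModule A (LinearMap.range f) := .congr e.symm
  obtain ⟨e'⟩ := isIsotypicOfType_submodule_iff.1 (.isotypicComponent A M T) _ hf
  exact hST.false (e.trans e')

/-- The layer `N / J N` is contained in the `T`-isotypic component of `M / J N`. For `T` simple this
says that `N / J N` is a sum of copies of `T`; working inside `M / J N` avoids quotients of
submodules. -/
def HasIsotypicLayer (J : Ideal A) (T : Type*) [AddCommGroup T] [Module A T]
    (N : Submodule A M) : Prop :=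
  N.map (J • N).mkQ ≤ isotypicComponent A (M ⧸ J • N) T

lemma hasIsotypicLayer_top (J : Ideal A) :
    HasIsotypicLayer J (M ⧸ J • (⊤ : Submodule A M)) (⊤ : Submodule A M) :=
  le_top.trans <| le_sSup ⟨Submodule.topEquiv⟩

lemma HasIsotypicLayer.map_algebraMap_smul {R : Type*} [CommRing R] [Algebra R A]
    [IsSimpleModule A T] {I : Ideal R} {N : Submodule A M}
    (hN : HasIsotypicLayer (I.map (algebraMap R A)) T N) :
    HasIsotypicLayer (I.map (algebraMap R A)) T (I.map (algebraMap R A) • N) := by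
  set J := I.map (algebraMap R A)
  refine Submodule.map_le_iff_le_comap.2 <| map_algebraMap_smul_le_iff.2 fun r hr x hx ↦ ?_
  let μ : M →ₗ[A] M := Module.End.smulLeft (algebraMap R A r) (Set.algebraMap_mem_center r)
  have hμ : N ≤ (J • N).comap μ :=
    fun y hy ↦ Submodule.smul_mem_smul (Ideal.mem_map_of_mem _ hr) hy
  have hμJ : J • N ≤ (J • J • N).comap μ :=
    (Submodule.smul_mono le_rfl hμ).trans (Submodule.smul_comap_le_comap_smul μ _ J)
  exact ((J • N).mapQ (J • J • N) μ hμJ).le_comap_isotypicComponent T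
    (hN (Submodule.mem_map_of_mem hx))

lemma HasIsotypicLayer.range_le_smul {J : Ideal A} [IsSimpleModule A T]
    [IsSimpleModule A (M ⧸ J • (⊤ : Submodule A M))]
    (hT : IsEmpty ((M ⧸ J • (⊤ : Submodule A M)) ≃ₗ[A] T)) {N : Submodule A M'}
    (hN : HasIsotypicLayer J T N) {f : M →ₗ[A] M'} (hf : LinearMap.range f ≤ N) :
    LinearMap.range f ≤ J • N := by
  have hker : J • ⊤ ≤ LinearMap.ker ((J • N).mkQ ∘ₗ f) := by
    rw [LinearMap.ker_comp, Submodule.ker_mkQ, ← Submodule.map_le_iff_le_comap,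
      Submodule.map_smul'', Submodule.map_top]
    exact Submodule.smul_mono le_rfl hf
  have hlift : (J • ⊤ : Submodule A M).liftQ _ hker = 0 := by
    refine eq_zero_of_range_le_isotypicComponent hT ?_
    rw [Submodule.range_liftQ, LinearMap.range_comp]
    exact (Submodule.map_mono hf).trans hN
  have hcomp : (J • N).mkQ ∘ₗ f = 0 := by
    rw [← Submodule.liftQ_mkQ _ _ hker, hlift, LinearMap.zero_comp]
  rwa [← LinearMap.range_le_ker_iff, Submodule.ker_mkQ] at hcomp

end Isotypic

section Filtration

variable {R A M M' : Type*} [CommRing R] [Ring A] [Algebra R A] [AddCommGroup M] [AddCommGroup M']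
  [Module A M] [Module A M']

lemma map_algebraMap_pow_zero_smul (I : Ideal R) (N : Submodule A M) :
    (I ^ 0).map (algebraMap R A) • N = N := by
  rw [pow_zero, Ideal.one_eq_top, Ideal.map_top, Submodule.top_smul]

lemma map_algebraMap_pow_succ_smul (I : Ideal R) (n : ℕ) (N : Submodule A M) :
    (I ^ (n + 1)).map (algebraMap R A) • N =
      I.map (algebraMap R A) • (I ^ n).map (algebraMap R A) • N := by
  rw [pow_succ', map_algebraMap_mul, Submodule.mul_smul]

lemma hasIsotypicLayer_map_algebraMap_pow_smul_top (I : Ideal R)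
    [IsSimpleModule A (M ⧸ I.map (algebraMap R A) • (⊤ : Submodule A M))] (n : ℕ) :
    HasIsotypicLayer (I.map (algebraMap R A))
      (M ⧸ I.map (algebraMap R A) • (⊤ : Submodule A M))
      ((I ^ n).map (algebraMap R A) • (⊤ : Submodule A M)) := by
  induction n with
  | zero => rw [map_algebraMap_pow_zero_smul]; exact hasIsotypicLayer_top _
  | succ n ih => rw [map_algebraMap_pow_succ_smul]; exact ih.map_algebraMap_smul

theorem hom_eq_zero_of_nonisomorphic_simple_reductions_general {I : Ideal R}
    (hI : ⨅ n : ℕ, (I ^ n).map (algebraMap R A) • (⊤ : Submodule A M') = ⊥)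
    (hM : IsSimpleModule A (M ⧸ I.map (algebraMap R A) • (⊤ : Submodule A M)))
    (hM' : IsSimpleModule A (M' ⧸ I.map (algebraMap R A) • (⊤ : Submodule A M')))
    (hne : IsEmpty ((M ⧸ I.map (algebraMap R A) • (⊤ : Submodule A M)) ≃ₗ[A]
      (M' ⧸ I.map (algebraMap R A) • (⊤ : Submodule A M'))))
    (f : M →ₗ[A] M') : f = 0 := by
  have hrange (n : ℕ) : LinearMap.range f ≤ (I ^ n).map (algebraMap R A) • ⊤ := by
    induction n with
    | zero => rw [map_algebraMap_pow_zero_smul]; exact le_top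
    | succ n ih =>
      rw [map_algebraMap_pow_succ_smul]
      exact (hasIsotypicLayer_map_algebraMap_pow_smul_top I n).range_le_smul hne ih
  exact LinearMap.range_eq_bot.1 <| le_bot_iff.1 <| (le_iInf hrange).trans_eq hI

lemma iInf_map_algebraMap_pow_smul_eq_bot {I : Ideal R} (hI : IsNilpotent I)
    (N : Submodule A M) : ⨅ n : ℕ, (I ^ n).map (algebraMap R A) • N = ⊥ := by
  obtain ⟨n, hn⟩ := hI
  refine le_bot_iff.1 <| (iInf_le _ n).trans_eq ?_
  rw [hn, Ideal.zero_eq_bot, Ideal.map_bot, Submodule.bot_smul]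

end Filtration

/-- Let `R` be a commutative Artinian local ring with maximal ideal `𝔪` and residue field
`k = R/𝔪`, and let `Λ` be a finite group.  Let `M` and `M′` be finitely generated
`R[Λ]`-modules such that the reductions `M/𝔪M` and `M′/𝔪M′` are non-isomorphic simple
(irreducible) `k[Λ]`-modules.  Then `Hom_{R[Λ]}(M, M′) = 0`. -/
theorem hom_eq_zero_of_nonisomorphic_simple_reductions
    {R : Type*} [CommRing R] [IsArtinianRing R] [IsLocalRing R]
    {Λ : Type*} [Group Λ] [Finite Λ]
    {M M' : Type*} [AddCommGroup M] [AddCommGroup M']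
    [Module (MonoidAlgebra R Λ) M] [Module (MonoidAlgebra R Λ) M']
    [Module.Finite (MonoidAlgebra R Λ) M] [Module.Finite (MonoidAlgebra R Λ) M']
    (hM : IsSimpleModule (MonoidAlgebra R Λ)
      (M ⧸ ((IsLocalRing.maximalIdeal R).map (algebraMap R (MonoidAlgebra R Λ)) •
        (⊤ : Submodule (MonoidAlgebra R Λ) M))))
    (hM' : IsSimpleModule (MonoidAlgebra R Λ)
      (M' ⧸ ((IsLocalRing.maximalIdeal R).map (algebraMap R (MonoidAlgebra R Λ)) •
        (⊤ : Submodule (MonoidAlgebra R Λ) M'))))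
    (hne : IsEmpty
      ((M ⧸ ((IsLocalRing.maximalIdeal R).map (algebraMap R (MonoidAlgebra R Λ)) •
        (⊤ : Submodule (MonoidAlgebra R Λ) M))) ≃ₗ[MonoidAlgebra R Λ]
       (M' ⧸ ((IsLocalRing.maximalIdeal R).map (algebraMap R (MonoidAlgebra R Λ)) •
        (⊤ : Submodule (MonoidAlgebra R Λ) M'))))) :
    ∀ f : M →ₗ[MonoidAlgebra R Λ] M', f = 0 := by
  have hnil : IsNilpotent (IsLocalRing.maximalIdeal R) :=
    (isArtinianRing_iff_isNilpotent_maximalIdeal R).1 inferInstance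
  exact hom_eq_zero_of_nonisomorphic_simple_reductions_general
    (iInf_map_algebraMap_pow_smul_eq_bot hnil ⊤) hM hM' hne
end

section
/- Let k be a field of characteristic p > 0, let R be a commutative Artinian local ring with maximal ideal 𝔪 and residue field k, and let Λ be a finite group with p ∤ |Λ|. Let M be an R[Λ]-module that is finite free as an R-module. Let P₁, …, P_r be R[Λ]-modules, each finite free as an R-module, whose reductions P̄_i = P_i/𝔪P_i are pairwise non-isomorphic absolutely irreducible k[Λ]-modules, and suppose that the reduction M/𝔪M is isomorphic as a k[Λ]-module to a direct sum of copies of the P̄_i. Then the natural evaluation map ⊕_{i=1}^r P_i ⊗_R Hom_{R[Λ]}(P_i, M) → M, sending x ⊗ f to f(x), is an isomorphism of R[Λ]-modules. -/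
open TensorProduct

/-- The evaluation map `P ⊗_O Hom_{A}(P, M) → M`, `p ⊗ f ↦ f(p)`, as an `O`-linear map. -/
noncomputable def evalTensor {O A P M : Type*} [CommRing O] [Ring A] [Algebra O A]
    [AddCommGroup M] [Module A M] [Module O M] [IsScalarTower O A M]
    [AddCommGroup P] [Module A P] [Module O P] [IsScalarTower O A P] :
    (P ⊗[O] (P →ₗ[A] M)) →ₗ[O] M :=
  TensorProduct.lift
    { toFun := fun p =>
        { toFun := fun f => f p
          map_add' := fun _ _ => rfl
          map_smul' := fun _ _ => rfl }
      map_add' := fun p q => LinearMap.ext fun f => f.map_add p q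
      map_smul' := fun c p => LinearMap.ext fun f => f.map_smul_of_tower c p }

/-- The total evaluation map `⊕ᵢ Pᵢ ⊗_O Hom_A(Pᵢ, M) → M`. -/
noncomputable def totalEval {O A M : Type*} [CommRing O] [Ring A] [Algebra O A]
    [AddCommGroup M] [Module A M] [Module O M] [IsScalarTower O A M]
    {r : ℕ} (P : Fin r → Type*) [∀ i, AddCommGroup (P i)]
    [∀ i, Module A (P i)] [∀ i, Module O (P i)] [∀ i, IsScalarTower O A (P i)] :
    (∀ i, (P i ⊗[O] (P i →ₗ[A] M))) →ₗ[O] M :=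
  ∑ i, (evalTensor (O := O) (A := A) (P := P i) (M := M)).comp (LinearMap.proj i)

/-!
Let `A` be an `O`-algebra, `I` an ideal of `O` inside the Jacobson radical, and let all modules be
projective over `A` and finite over `O`; for `A = O[Λ]` with `|Λ|` invertible in `O`, projectivity
over `O` suffices, by averaging. By uniqueness of projective covers, an isomorphism
`M / I M ≃ ∏ᵢ (Pᵢ / I Pᵢ)^{nᵢ}` lifts to `M ≃ ∏ᵢ Pᵢ^{nᵢ}`. Projectivity of `Pᵢ` identifies the maps
`Pᵢ → Pⱼ` with values in `I Pⱼ` with `I Hom_A(Pᵢ, Pⱼ)`, so Nakayama's lemma lifts Schur's lemma: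
`Hom_A(Pᵢ, Pⱼ) = 0` for `i ≠ j` and `End_A(Pᵢ)` consists of scalars. Hence the `nᵢ` inclusions of
`Pᵢ` span `Hom_A(Pᵢ, M)`, and evaluation along them is the isomorphism `∏ᵢ Pᵢ^{nᵢ} ≃ M`.
-/

/-- The reduction `M ⧸ I M` of a module `M` over an `O`-algebra `A` modulo an ideal `I` of `O`, with
`I M` encoded as `I A • ⊤` so that the quotient is again an `A`-module. -/
abbrev Reduction {O : Type*} (A : Type*) [CommRing O] [Ring A] [Algebra O A] (I : Ideal O)
    (M : Type*) [AddCommGroup M] [Module A M] : Type _ :=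
  M ⧸ (I.map (algebraMap O A) • (⊤ : Submodule A M))

section Reduction

variable {O A M : Type*} [CommRing O] [Ring A] [Algebra O A] [AddCommGroup M] [Module A M]

theorem exists_reduction_map {N : Type*} [AddCommGroup N] [Module A N] (I : Ideal O)
    (f : M →ₗ[A] N) :
    ∃ g : Reduction A I M →ₗ[A] Reduction A I N,
      ∀ x, g (Submodule.Quotient.mk x) = Submodule.Quotient.mk (f x) :=
  ⟨Submodule.mapQ _ _ f (Submodule.smul_top_le_comap_smul_top _ f), fun _ => rfl⟩

variable [Module O M] [IsScalarTower O A M] {I : Ideal O}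

theorem restrictScalars_map_smul_top :
    (I.map (algebraMap O A) • (⊤ : Submodule A M)).restrictScalars O = I • ⊤ := by
  refine le_antisymm (fun x hx => ?_) (Submodule.smul_le.2 fun c hc m _ => ?_)
  · rw [Submodule.restrictScalars_mem] at hx
    refine Submodule.smul_induction_on hx (fun a ha m _ => ?_) fun _ _ => add_mem
    induction ha using Submodule.span_induction with
    | mem _ h =>
      obtain ⟨c, hc, rfl⟩ := h
      rw [algebraMap_smul]
      exact Submodule.smul_mem_smul hc trivial
    | zero => simp only [zero_smul, zero_mem]
    | add a b _ _ ha hb => rw [add_smul]; exact add_mem ha hb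
    | smul b a _ ha =>
      rw [smul_assoc]
      exact Submodule.smul_top_le_comap_smul_top I (Algebra.lsmul O O M b) ha
  · rw [Submodule.restrictScalars_mem, ← algebraMap_smul A]
    exact Submodule.smul_mem_smul (Ideal.mem_map_of_mem _ hc) trivial

theorem reduction_mk_eq_zero_iff {x : M} :
    (Submodule.Quotient.mk x : Reduction A I M) = 0 ↔ x ∈ I • (⊤ : Submodule O M) := by
  rw [Submodule.Quotient.mk_eq_zero, ← restrictScalars_map_smul_top (A := A),
    Submodule.restrictScalars_mem]

theorem reduction_mk_eq_iff {x y : M} :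
    (Submodule.Quotient.mk x : Reduction A I M) = Submodule.Quotient.mk y ↔
      x - y ∈ I • (⊤ : Submodule O M) := by
  rw [← reduction_mk_eq_zero_iff (A := A), Submodule.Quotient.mk_sub, sub_eq_zero]

end Reduction

theorem mem_smul_top_pi {O ι : Type*} [CommRing O] [Finite ι] {M : ι → Type*}
    [∀ i, AddCommGroup (M i)] [∀ i, Module O (M i)] {I : Ideal O} {x : ∀ i, M i}
    (hx : ∀ i, x i ∈ I • (⊤ : Submodule O (M i))) : x ∈ I • (⊤ : Submodule O (∀ i, M i)) := by
  classical
  cases nonempty_fintype ι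
  rw [← Finset.univ_sum_single x]
  exact sum_mem fun i _ =>
    Submodule.smul_top_le_comap_smul_top I (LinearMap.single O M i) (hx i)

section Nakayama

variable {O A M N X : Type*} [CommRing O] [Ring A] [Algebra O A]
  [AddCommGroup M] [Module A M] [Module O M] [IsScalarTower O A M]
  [AddCommGroup N] [Module A N] [Module O N] [IsScalarTower O A N]
  [AddCommGroup X] [Module A X] {I : Ideal O}

theorem eq_top_of_forall_exists_sub_mem_smul_top [Module.Finite O M] (hI : I ≤ Ideal.jacobson ⊥)
    {S : Submodule O M} (hS : ∀ x, ∃ y ∈ S, x - y ∈ I • (⊤ : Submodule O M)) : S = ⊤ := by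
  refine top_le_iff.1 (Submodule.le_of_le_smul_of_le_jacobson_bot Module.Finite.fg_top hI ?_)
  intro x _
  obtain ⟨y, hy, hxy⟩ := hS x
  rw [← add_sub_cancel y x]
  exact Submodule.add_mem_sup hy hxy

theorem surjective_of_comp_surjective_of_ker_le [Module.Finite O M] (hI : I ≤ Ideal.jacobson ⊥)
    {f : N →ₗ[A] M} {π : M →ₗ[A] X} (hπ : ∀ x, π x = 0 → x ∈ I • (⊤ : Submodule O M))
    (hf : Function.Surjective (π ∘ₗ f)) : Function.Surjective f := by
  have hrange : LinearMap.range (f.restrictScalars O) = ⊤ := by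
    refine eq_top_of_forall_exists_sub_mem_smul_top hI fun y => ?_
    obtain ⟨x, hx⟩ := hf (π y)
    exact ⟨f x, ⟨x, rfl⟩, hπ _ (by rw [map_sub, ← hx, LinearMap.comp_apply, sub_self])⟩
  exact (LinearMap.range_eq_top (f := f.restrictScalars O)).1 hrange

theorem nonempty_linearEquiv_of_surjective_of_ker_le [Module.Finite O M] [Module.Finite O N]
    [Module.Projective A M] [Module.Projective A N] (hI : I ≤ Ideal.jacobson ⊥)
    {π : M →ₗ[A] X} (hπ : Function.Surjective π)
    (hπI : ∀ x, π x = 0 → x ∈ I • (⊤ : Submodule O M))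
    {ρ : N →ₗ[A] X} (hρ : Function.Surjective ρ)
    (hρI : ∀ x, ρ x = 0 → x ∈ I • (⊤ : Submodule O N)) : Nonempty (M ≃ₗ[A] N) := by
  obtain ⟨φ, hφ⟩ := Module.projective_lifting_property ρ π hρ
  obtain ⟨ψ, hψ⟩ := Module.projective_lifting_property π ρ hπ
  have hφ_surj : Function.Surjective φ :=
    surjective_of_comp_surjective_of_ker_le hI hρI (by rwa [hφ])
  have hψ_surj : Function.Surjective ψ :=
    surjective_of_comp_surjective_of_ker_le hI hπI (by rwa [hψ])
  have hψφ_inj : Function.Injective ((ψ ∘ₗ φ).restrictScalars O) :=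
    OrzechProperty.injective_of_surjective_endomorphism _ (hψ_surj.comp hφ_surj)
  exact ⟨.ofBijective φ ⟨Function.Injective.of_comp (f := ψ) hψφ_inj, hφ_surj⟩⟩

end Nakayama

section Hom

variable {O A P M : Type*} [CommRing O] [Ring A] [Algebra O A]
  [AddCommGroup M] [Module A M] [Module O M] [IsScalarTower O A M]
  [AddCommGroup P] [Module A P] [Module.Projective A P]

variable (O A P M) in
theorem exists_linearMap_pi_hom_retraction [Module.Finite A P] :
    ∃ (n : ℕ) (p : Fin n → P) (T : (Fin n → M) →ₗ[O] (P →ₗ[A] M)),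
      ∀ f : P →ₗ[A] M, T (f ∘ p) = f := by
  obtain ⟨n, π, s, -, -, hπs⟩ := Module.Finite.exists_comp_eq_id_of_projective A P
  let b := Pi.basisFun A (Fin n)
  refine ⟨n, π ∘ b, LinearMap.lcomp O M s ∘ₗ (b.constr O).toLinearMap, fun f => ?_⟩
  have hconstr : b.constr O (f ∘ π ∘ b) = f ∘ₗ π := b.ext fun j => b.constr_basis O _ j
  calc b.constr O (f ∘ π ∘ b) ∘ₗ s = f ∘ₗ (π ∘ₗ s) := by rw [hconstr, LinearMap.comp_assoc]
    _ = f := by rw [hπs, LinearMap.comp_id]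

theorem finite_hom_of_projective [Module.Finite A P] [Module.Finite O M] :
    Module.Finite O (P →ₗ[A] M) := by
  obtain ⟨n, p, T, hT⟩ := exists_linearMap_pi_hom_retraction O A P M
  exact .of_surjective T fun f => ⟨f ∘ p, hT f⟩

theorem mem_smul_top_hom [Module.Finite A P] {I : Ideal O}
    {f : P →ₗ[A] M} (hf : ∀ x, f x ∈ I • (⊤ : Submodule O M)) :
    f ∈ I • (⊤ : Submodule O (P →ₗ[A] M)) := by
  obtain ⟨n, p, T, hT⟩ := exists_linearMap_pi_hom_retraction O A P M
  rw [← hT f]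
  exact Submodule.smul_top_le_comap_smul_top I T (mem_smul_top_pi fun j => hf (p j))

theorem hom_eq_zero_of_reduction_hom_eq_zero [Module.Finite A P] [Module.Finite O M] {I : Ideal O}
    (hI : I ≤ Ideal.jacobson ⊥)
    (h : ∀ g : Reduction A I P →ₗ[A] Reduction A I M, g = 0) (f : P →ₗ[A] M) : f = 0 := by
  have := finite_hom_of_projective (O := O) (A := A) (P := P) (M := M)
  have hbot : (⊥ : Submodule O (P →ₗ[A] M)) = ⊤ := by
    refine eq_top_of_forall_exists_sub_mem_smul_top hI fun f => ⟨0, zero_mem _, ?_⟩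
    obtain ⟨g, hg⟩ := exists_reduction_map I f
    refine mem_smul_top_hom fun x => ?_
    rw [sub_zero, ← reduction_mk_eq_zero_iff (A := A), ← hg, h g, LinearMap.zero_apply]
  exact (Submodule.mem_bot O).1 (hbot.ge Submodule.mem_top)

theorem exists_eq_smul_of_reduction_end_eq_smul [Module O P] [IsScalarTower O A P]
    [Module.Finite O P] {I : Ideal O} (hI : I ≤ Ideal.jacobson ⊥)
    (h : ∀ g : Reduction A I P →ₗ[A] Reduction A I P,
      ∃ c : O, ∀ x, g x = algebraMap O A c • x) (f : P →ₗ[A] P) :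
    ∃ c : O, ∀ x, f x = c • x := by
  have := Module.Finite.of_restrictScalars_finite O A P
  have := finite_hom_of_projective (O := O) (A := A) (P := P) (M := P)
  have hspan : Submodule.span O {(LinearMap.id : P →ₗ[A] P)} = ⊤ := by
    refine eq_top_of_forall_exists_sub_mem_smul_top hI fun f => ?_
    obtain ⟨g, hg⟩ := exists_reduction_map I f
    obtain ⟨c, hc⟩ := h g
    refine ⟨c • LinearMap.id, Submodule.smul_mem _ _ (Submodule.mem_span_singleton_self _),
      mem_smul_top_hom fun x => ?_⟩
    rw [LinearMap.sub_apply, ← reduction_mk_eq_iff (A := A), ← hg, hc, algebraMap_smul]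
    rfl
  obtain ⟨c, rfl⟩ := Submodule.mem_span_singleton.1 (hspan.ge (Submodule.mem_top (x := f)))
  exact ⟨c, fun _ => rfl⟩

end Hom

theorem surjective_sum_tmul_of_span_eq_top {O P N ι : Type*} [CommRing O] [AddCommGroup P]
    [Module O P] [AddCommGroup N] [Module O N] [Fintype ι] {v : ι → N}
    (hv : Submodule.span O (Set.range v) = ⊤) :
    Function.Surjective fun x : ι → P => ∑ j, x j ⊗ₜ[O] v j := by
  intro t
  induction t using TensorProduct.induction_on with
  | zero => exact ⟨0, by simp only [Pi.zero_apply, zero_tmul, Finset.sum_const_zero]⟩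
  | tmul y n =>
    obtain ⟨c, rfl⟩ := (Submodule.mem_span_range_iff_exists_fun O).1
      (hv.ge (Submodule.mem_top (x := n)))
    exact ⟨fun j => c j • y, by simp only [tmul_sum, smul_tmul]⟩
  | add s t hs ht =>
    obtain ⟨x, rfl⟩ := hs
    obtain ⟨y, rfl⟩ := ht
    exact ⟨x + y, by simp only [Pi.add_apply, add_tmul, Finset.sum_add_distrib]⟩

section TotalEval

variable {O A M : Type*} [CommRing O] [Ring A] [Algebra O A]
  [AddCommGroup M] [Module A M] [Module O M] [IsScalarTower O A M]

theorem evalTensor_smul {P : Type*} [AddCommGroup P] [Module A P] [Module O P]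
    [IsScalarTower O A P] (a : A) (t : P ⊗[O] (P →ₗ[A] M)) :
    evalTensor (a • t) = a • evalTensor t := by
  induction t using TensorProduct.induction_on with
  | zero => simp only [smul_zero, map_zero]
  | tmul x f => exact f.map_smul a x
  | add s t hs ht => rw [smul_add, map_add, map_add, hs, ht, smul_add]

variable {r : ℕ} (P : Fin r → Type*) [∀ i, AddCommGroup (P i)]
  [∀ i, Module A (P i)] [∀ i, Module O (P i)] [∀ i, IsScalarTower O A (P i)]

theorem totalEval_apply (x : ∀ i, (P i ⊗[O] (P i →ₗ[A] M))) :
    totalEval P x = ∑ i, evalTensor (x i) := by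
  simp only [totalEval, LinearMap.sum_apply, LinearMap.comp_apply, LinearMap.proj_apply]

theorem totalEval_smul (a : A) (x : ∀ i, (P i ⊗[O] (P i →ₗ[A] M))) :
    totalEval P (a • x) = a • totalEval P x := by
  simp only [totalEval_apply, Pi.smul_apply, evalTensor_smul, Finset.smul_sum]

end TotalEval

section Copies

variable {O A M κ : Type*} [CommRing O] [Ring A] [AddCommGroup M] [Module A M]
  [DecidableEq κ] {P : κ → Type*} [∀ i, AddCommGroup (P i)] [∀ i, Module A (P i)]
  {ι : κ → Type*}

theorem exists_eq_single_smul [∀ i, Module O (P i)]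
    (hscalar : ∀ i (f : P i →ₗ[A] P i), ∃ c : O, ∀ x, f x = c • x)
    (hzero : ∀ i j, i ≠ j → ∀ f : P i →ₗ[A] P j, f = 0) {i : κ}
    (h : P i →ₗ[A] ∀ i, ι i → P i) :
    ∃ c : ι i → O, ∀ x, h x = Pi.single i fun j => c j • x := by
  choose c hc using fun j => hscalar i (LinearMap.proj j ∘ₗ LinearMap.proj i ∘ₗ h)
  refine ⟨c, fun x => funext fun i' => ?_⟩
  rcases eq_or_ne i' i with rfl | hi
  · rw [Pi.single_eq_same]
    exact funext fun j => hc j x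
  · rw [Pi.single_eq_of_ne hi]
    exact funext fun j =>
      LinearMap.congr_fun (hzero i i' hi.symm (LinearMap.proj j ∘ₗ LinearMap.proj i' ∘ₗ h)) x

variable [∀ i, DecidableEq (ι i)]

/-- The restriction of `φ : ∏ i, P i ^ ι i → M` to the `j`-th copy of `P i`. -/
def restrictCopy (φ : (∀ i, ι i → P i) →ₗ[A] M) (i : κ) (j : ι i) : P i →ₗ[A] M :=
  φ ∘ₗ LinearMap.single A (fun i => ι i → P i) i ∘ₗ LinearMap.single A (fun _ => P i) j

theorem sum_restrictCopy_apply (φ : (∀ i, ι i → P i) →ₗ[A] M) (i : κ) [Fintype (ι i)]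
    (y : ι i → P i) : ∑ j, restrictCopy φ i j (y j) = φ (Pi.single i y) := by
  conv_rhs => rw [← Finset.univ_sum_single y]
  rw [← LinearMap.single_apply (R := A), map_sum, map_sum]
  rfl

theorem sum_sum_restrictCopy_apply [Fintype κ] [∀ i, Fintype (ι i)]
    (φ : (∀ i, ι i → P i) →ₗ[A] M) (x : ∀ i, ι i → P i) :
    ∑ i, ∑ j, restrictCopy φ i j (x i j) = φ x := by
  simp only [sum_restrictCopy_apply, ← map_sum, Finset.univ_sum_single]

theorem span_restrictCopy_eq_top [Algebra O A] [Module O M] [IsScalarTower O A M]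
    [∀ i, Module O (P i)] [∀ i, IsScalarTower O A (P i)]
    (hscalar : ∀ i (f : P i →ₗ[A] P i), ∃ c : O, ∀ x, f x = c • x)
    (hzero : ∀ i j, i ≠ j → ∀ f : P i →ₗ[A] P j, f = 0)
    (φ : (∀ i, ι i → P i) ≃ₗ[A] M) (i : κ) [Finite (ι i)] :
    Submodule.span O (Set.range (restrictCopy φ.toLinearMap i)) = ⊤ := by
  cases nonempty_fintype (ι i)
  refine Submodule.eq_top_iff'.2 fun f => (Submodule.mem_span_range_iff_exists_fun O).2 ?_
  obtain ⟨c, hc⟩ := exists_eq_single_smul hscalar hzero (φ.symm.toLinearMap ∘ₗ f)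
  refine ⟨c, LinearMap.ext fun x => ?_⟩
  calc (∑ j, c j • restrictCopy φ.toLinearMap i j) x
      = ∑ j, restrictCopy φ.toLinearMap i j (c j • x) := by
        simp only [LinearMap.sum_apply, LinearMap.smul_apply, LinearMap.map_smul_of_tower]
    _ = φ (φ.symm (f x)) := by
        rw [sum_restrictCopy_apply]
        exact congrArg φ (hc x).symm
    _ = f x := φ.apply_symm_apply _

end Copies

theorem projective_pi {A ι : Type*} [Ring A] [Finite ι] (M : ι → Type*) [∀ i, AddCommGroup (M i)]
    [∀ i, Module A (M i)] [∀ i, Module.Projective A (M i)] : Module.Projective A (∀ i, M i) := by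
  classical
  cases nonempty_fintype ι
  exact .of_equiv (DFinsupp.linearEquivFunOnFintype (R := A) (M := M))

section General

variable {O A M : Type*} [CommRing O] [Ring A] [Algebra O A]
  [AddCommGroup M] [Module A M] [Module O M] [IsScalarTower O A M]
  {r : ℕ} {P : Fin r → Type*} [∀ i, AddCommGroup (P i)]
  [∀ i, Module A (P i)] [∀ i, Module O (P i)] [∀ i, IsScalarTower O A (P i)]
  {ι : Fin r → Type*} [∀ i, Finite (ι i)]

theorem totalEval_bijective_of_linearEquiv
    (hscalar : ∀ i (f : P i →ₗ[A] P i), ∃ c : O, ∀ x, f x = c • x)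
    (hzero : ∀ i j, i ≠ j → ∀ f : P i →ₗ[A] P j, f = 0)
    (φ : (∀ i, ι i → P i) ≃ₗ[A] M) :
    Function.Bijective (totalEval (O := O) (A := A) (M := M) P) := by
  classical
  have := fun i => Fintype.ofFinite (ι i)
  let F := restrictCopy φ.toLinearMap
  let s (x : ∀ i, ι i → P i) (i : Fin r) : P i ⊗[O] (P i →ₗ[A] M) := ∑ j, x i j ⊗ₜ F i j
  have hs : Function.Surjective s := Function.Surjective.piMap fun i =>
    surjective_sum_tmul_of_span_eq_top (span_restrictCopy_eq_top hscalar hzero φ i)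
  have htotalEval_s : totalEval P ∘ s = φ := funext fun x => by
    rw [Function.comp_apply, totalEval_apply]
    simp only [s, map_sum]
    exact sum_sum_restrictCopy_apply φ.toLinearMap x
  have hbij : Function.Bijective (totalEval P ∘ s) := htotalEval_s ▸ φ.bijective
  exact ⟨.of_comp_right hbij.1 hs, .of_comp hbij.2⟩

theorem nonempty_linearEquiv_pi_of_reduction [Module.Finite O M] [Module.Projective A M]
    [∀ i, Module.Finite O (P i)] [∀ i, Module.Projective A (P i)] {I : Ideal O}
    (hI : I ≤ Ideal.jacobson ⊥)
    (e : Reduction A I M ≃ₗ[A] ∀ i, ι i → Reduction A I (P i)) :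
    Nonempty ((∀ i, ι i → P i) ≃ₗ[A] M) := by
  let π : (∀ i, ι i → P i) →ₗ[A] ∀ i, ι i → Reduction A I (P i) :=
    LinearMap.piMap fun i => (Submodule.mkQ _).compLeft (ι i)
  have hπ : Function.Surjective π := Function.Surjective.piMap fun i =>
    (Submodule.mkQ_surjective _).comp_left
  have hπI (x : ∀ i, ι i → P i) (hx : π x = 0) : x ∈ I • (⊤ : Submodule O (∀ i, ι i → P i)) :=
    mem_smul_top_pi fun i => mem_smul_top_pi fun j =>
      (reduction_mk_eq_zero_iff (A := A)).1 (congrFun (congrFun hx i) j)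
  have := fun i => projective_pi (A := A) fun _ : ι i => P i
  have := projective_pi (A := A) fun i => ι i → P i
  refine nonempty_linearEquiv_of_surjective_of_ker_le hI hπ hπI
    (ρ := e.toLinearMap ∘ₗ Submodule.mkQ _) (e.surjective.comp (Submodule.mkQ_surjective _))
    fun x hx => ?_
  exact (reduction_mk_eq_zero_iff (A := A)).1 (e.map_eq_zero_iff.1 hx)

theorem totalEval_bijective_general [Module.Finite O M] [Module.Projective A M]
    [∀ i, Module.Finite O (P i)] [∀ i, Module.Projective A (P i)] {I : Ideal O}
    (hI : I ≤ Ideal.jacobson ⊥)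
    (hscalar : ∀ i, ∀ f : Reduction A I (P i) →ₗ[A] Reduction A I (P i),
      ∃ c : O, ∀ x, f x = algebraMap O A c • x)
    (hzero : ∀ i j, i ≠ j → ∀ f : Reduction A I (P i) →ₗ[A] Reduction A I (P j), f = 0)
    (e : Reduction A I M ≃ₗ[A] ∀ i, ι i → Reduction A I (P i)) :
    Function.Bijective (totalEval (O := O) (A := A) (M := M) P) ∧
      ∀ (a : A) (x : ∀ i, (P i ⊗[O] (P i →ₗ[A] M))),
        totalEval P (a • x) = a • totalEval P x := by
  have := fun i => Module.Finite.of_restrictScalars_finite O A (P i)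
  obtain ⟨φ⟩ := nonempty_linearEquiv_pi_of_reduction hI e
  refine ⟨totalEval_bijective_of_linearEquiv (fun i => ?_) (fun i j hij => ?_) φ, totalEval_smul P⟩
  · exact exists_eq_smul_of_reduction_end_eq_smul hI (hscalar i)
  · exact hom_eq_zero_of_reduction_hom_eq_zero hI (hzero i j hij)

end General

section GroupAlgebra

variable {O Λ P : Type*} [CommRing O] [Group Λ] [AddCommGroup P] [Module (MonoidAlgebra O Λ) P]
  [Module O P] [IsScalarTower O (MonoidAlgebra O Λ) P]

theorem comp_equivariantProjection_eq_id {F : Type*} [Fintype Λ] [AddCommGroup F]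
    [Module (MonoidAlgebra O Λ) F] [Module O F] [IsScalarTower O (MonoidAlgebra O Λ) F]
    (hΛ : IsUnit (Nat.card Λ : O)) {f : F →ₗ[MonoidAlgebra O Λ] P} {s : P →ₗ[O] F}
    (hs : ∀ x, f (s x) = x) : f ∘ₗ s.equivariantProjection Λ = LinearMap.id := by
  have hconjugate (g : Λ) (x : P) : f (s.conjugate g x) = x := by
    rw [LinearMap.conjugate_apply, map_smul, hs, ← mul_smul, MonoidAlgebra.single_mul_single,
      mul_one, inv_mul_cancel, ← MonoidAlgebra.one_def, one_smul]
  ext x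
  calc f (s.equivariantProjection Λ x)
      = Ring.inverse (Nat.card Λ : O) • ∑ g : Λ, f (s.conjugate g x) := by
        rw [LinearMap.equivariantProjection_apply, LinearMap.map_smul_of_tower, map_sum]
    _ = Ring.inverse (Nat.card Λ : O) • (Nat.card Λ : O) • x := by
        simp only [hconjugate, Finset.sum_const, Finset.card_univ, Fintype.card_eq_nat_card,
          Nat.cast_smul_eq_nsmul]
    _ = x := by rw [smul_smul, Ring.inverse_mul_cancel _ hΛ, one_smul]

theorem projective_monoidAlgebra_of_isUnit_card [Finite Λ] [Module.Projective O P]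
    (hΛ : IsUnit (Nat.card Λ : O)) : Module.Projective (MonoidAlgebra O Λ) P := by
  cases nonempty_fintype Λ
  refine .of_lifting_property'' fun f hf => ?_
  obtain ⟨s, hs⟩ := Module.projective_lifting_property (f.restrictScalars O) LinearMap.id hf
  exact ⟨_, comp_equivariantProjection_eq_id hΛ (LinearMap.congr_fun hs)⟩

end GroupAlgebra

theorem isUnit_natCast_of_not_dvd {O : Type*} [CommRing O] [IsLocalRing O] {p n : ℕ}
    [CharP (O ⧸ IsLocalRing.maximalIdeal O) p] (hn : ¬ p ∣ n) : IsUnit (n : O) := by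
  rwa [← IsLocalRing.notMem_maximalIdeal, ← Ideal.Quotient.eq_zero_iff_mem, map_natCast,
    CharP.cast_eq_zero_iff _ p]

theorem eq_zero_of_isEmpty_linearEquiv {A S T : Type*} [Ring A] [AddCommGroup S] [Module A S]
    [AddCommGroup T] [Module A T] [IsSimpleModule A S] [IsSimpleModule A T]
    (h : IsEmpty (S ≃ₗ[A] T)) (f : S →ₗ[A] T) : f = 0 :=
  f.bijective_or_eq_zero.resolve_left fun hf => h.false (.ofBijective f hf)

/-- Let `k` be a field of characteristic `p > 0`, let `O` be a commutative Noetherian local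
ring with maximal ideal `𝔪` and residue field `k`, and let `Λ` be a finite group with
`p ∤ |Λ|`.  Let `M` be an `O[Λ]`-module that is finite free as an `O`-module.  Let
`P₁, …, P_r` be `O[Λ]`-modules, each finite free as an `O`-module, whose reductions
`P̄ᵢ = Pᵢ/𝔪Pᵢ` are pairwise non-isomorphic absolutely irreducible `k[Λ]`-modules, and
suppose that the reduction `M/𝔪M` is isomorphic as a `k[Λ]`-module to a direct sum of
copies of the `P̄ᵢ`.  Then the natural evaluation map
`⊕ᵢ Pᵢ ⊗_O Hom_{O[Λ]}(Pᵢ, M) → M`, `x ⊗ f ↦ f(x)`, is an isomorphism of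
`O[Λ]`-modules. -/
theorem totalEval_bijective {O : Type*} [CommRing O] [IsNoetherianRing O] [IsLocalRing O]
    (p : ℕ) (hp : 0 < p) [CharP (O ⧸ IsLocalRing.maximalIdeal O) p]
    {Λ : Type*} [Group Λ] [Finite Λ] (hΛ : ¬ p ∣ Nat.card Λ)
    {M : Type*} [AddCommGroup M] [Module (MonoidAlgebra O Λ) M]
    [Module O M] [IsScalarTower O (MonoidAlgebra O Λ) M]
    [Module.Finite O M] [Module.Free O M]
    {r : ℕ} (P : Fin r → Type*) [∀ i, AddCommGroup (P i)]
    [∀ i, Module (MonoidAlgebra O Λ) (P i)] [∀ i, Module O (P i)]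
    [∀ i, IsScalarTower O (MonoidAlgebra O Λ) (P i)]
    [∀ i, Module.Finite O (P i)] [∀ i, Module.Free O (P i)]
    -- each reduction `P̄ᵢ` is simple (irreducible) ...
    (hsimple : ∀ i, IsSimpleModule (MonoidAlgebra O Λ)
      ((P i) ⧸ ((IsLocalRing.maximalIdeal O).map (algebraMap O (MonoidAlgebra O Λ)) •
        (⊤ : Submodule (MonoidAlgebra O Λ) (P i)))))
    -- ... and absolutely irreducible: all its `k[Λ]`-endomorphisms are scalars
    (habs : ∀ i, ∀ f : ((P i) ⧸ ((IsLocalRing.maximalIdeal O).map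
          (algebraMap O (MonoidAlgebra O Λ)) • (⊤ : Submodule (MonoidAlgebra O Λ) (P i))))
        →ₗ[MonoidAlgebra O Λ]
        ((P i) ⧸ ((IsLocalRing.maximalIdeal O).map (algebraMap O (MonoidAlgebra O Λ)) •
          (⊤ : Submodule (MonoidAlgebra O Λ) (P i)))),
      ∃ c : O, ∀ x, f x = algebraMap O (MonoidAlgebra O Λ) c • x)
    -- the reductions are pairwise non-isomorphic
    (hdiff : ∀ i j, i ≠ j → IsEmpty
      (((P i) ⧸ ((IsLocalRing.maximalIdeal O).map (algebraMap O (MonoidAlgebra O Λ)) •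
        (⊤ : Submodule (MonoidAlgebra O Λ) (P i)))) ≃ₗ[MonoidAlgebra O Λ]
       ((P j) ⧸ ((IsLocalRing.maximalIdeal O).map (algebraMap O (MonoidAlgebra O Λ)) •
        (⊤ : Submodule (MonoidAlgebra O Λ) (P j))))))
    -- `M/𝔪M` is a direct sum of copies of the `P̄ᵢ`
    (hM : ∃ n : Fin r → ℕ, Nonempty
      ((M ⧸ ((IsLocalRing.maximalIdeal O).map (algebraMap O (MonoidAlgebra O Λ)) •
        (⊤ : Submodule (MonoidAlgebra O Λ) M))) ≃ₗ[MonoidAlgebra O Λ]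
       (∀ i, Fin (n i) → ((P i) ⧸ ((IsLocalRing.maximalIdeal O).map
          (algebraMap O (MonoidAlgebra O Λ)) •
          (⊤ : Submodule (MonoidAlgebra O Λ) (P i))))))) :
    Function.Bijective (totalEval (O := O) (A := MonoidAlgebra O Λ) (M := M) P) ∧
    ∀ (a : MonoidAlgebra O Λ) (x : ∀ i, (P i ⊗[O] (P i →ₗ[MonoidAlgebra O Λ] M))),
      totalEval (O := O) (A := MonoidAlgebra O Λ) (M := M) P (a • x) =
        a • totalEval (O := O) (A := MonoidAlgebra O Λ) (M := M) P x := by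
  have hunit : IsUnit (Nat.card Λ : O) := isUnit_natCast_of_not_dvd hΛ
  have := projective_monoidAlgebra_of_isUnit_card (P := M) hunit
  have := fun i => projective_monoidAlgebra_of_isUnit_card (P := P i) hunit
  obtain ⟨n, ⟨e⟩⟩ := hM
  exact totalEval_bijective_general (IsLocalRing.maximalIdeal_le_jacobson ⊥) habs
    (fun i j hij => eq_zero_of_isEmpty_linearEquiv (hdiff i j hij)) e
end

section
/- Let k be a field of characteristic different from 2, let ε ∈ {+1, −1}, and let τ and W be nonzero finite-dimensional k-vector spaces. Suppose given bilinear forms ⟨·,·⟩_τ on τ and ⟨·,·⟩_W on W, both nondegenerate (perfect), such that the bilinear form B on τ ⊗_k W determined by B(v₁ ⊗ w₁, v₂ ⊗ w₂) = ⟨v₁, v₂⟩_τ · ⟨w₁, w₂⟩_W is ε-symmetric, i.e., B(x, y) = ε·B(y, x) for all x, y. Then there exist signs ε_τ, ε_W ∈ {+1, −1} with ε_τ · ε_W = ε such that ⟨v₁, v₂⟩_τ = ε_τ · ⟨v₂, v₁⟩_τ for all v₁, v₂ ∈ τ and ⟨w₁, w₂⟩_W = ε_W · ⟨w₂, w₁⟩_W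 for all w₁, w₂ ∈ W. -/
open TensorProduct LinearMap

/-!
Fix a pair on which one of the two nonzero forms does not vanish. On pure tensors, the symmetry of
`B` becomes `p * ⟨x, y⟩ = q * ⟨y, x⟩` for the other form, with constants `p ≠ 0` and `q`. Applying
this twice gives `p ^ 2 = q ^ 2`, hence `q = ± p`, and cancelling `p` shows that the other form is
`± 1`-symmetric. The two signs multiply to `ε` since a nonzero form determines its sign.
-/

section EpsSymmetric

open LinearMap (BilinForm)

variable {R M N : Type*} [AddCommMonoid M] [AddCommMonoid N]

section Semiring

variable [CommSemiring R] [Module R M] [Module R N]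

/-- An `ε`-symmetric bilinear form, the common notion behind symmetric (`ε = 1`) and skew-symmetric
(`ε = -1`) forms. The scalar `ε` is not required to be a sign. -/
def IsEpsSymmetric (ε : R) (B : BilinForm R M) : Prop :=
  ∀ x y, B x y = ε * B y x

theorem exists_apply_apply_ne_zero {B : BilinForm R M} (hB : B ≠ 0) : ∃ x y, B x y ≠ 0 := by
  contrapose! hB
  exact LinearMap.ext₂ hB

theorem bilinForm_tmul_ne_zero [NoZeroDivisors R] {B : BilinForm R M} {C : BilinForm R N}
    (hB : B ≠ 0) (hC : C ≠ 0) : B.tmul C ≠ 0 := by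
  obtain ⟨x, y, hxy⟩ := exists_apply_apply_ne_zero hB
  obtain ⟨z, w, hzw⟩ := exists_apply_apply_ne_zero hC
  intro h
  have hpure : B.tmul C (x ⊗ₜ z) (y ⊗ₜ w) = 0 := by rw [h]; rfl
  rw [BilinForm.tensorDistrib_tmul, smul_eq_mul] at hpure
  exact mul_ne_zero hzw hxy hpure

namespace IsEpsSymmetric

variable {ε ε' : R} {B : BilinForm R M} {C : BilinForm R N}

theorem unique [IsCancelMulZero R] (hB : B ≠ 0) (h : IsEpsSymmetric ε B)
    (h' : IsEpsSymmetric ε' B) : ε = ε' := by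
  obtain ⟨x, y, hxy⟩ := exists_apply_apply_ne_zero hB
  exact mul_right_cancel₀ hxy ((h y x).symm.trans (h' y x))

theorem tmul (hB : IsEpsSymmetric ε B) (hC : IsEpsSymmetric ε' C) :
    IsEpsSymmetric (ε * ε') (B.tmul C) := by
  suffices B.tmul C = (ε * ε') • (B.tmul C).flip from LinearMap.congr_fun₂ this
  ext x z y w
  simp [hB x y, hC z w, mul_mul_mul_comm, mul_comm]

theorem apply_mul_apply_of_tmul (h : IsEpsSymmetric ε (B.tmul C)) (x y : M) (z w : N) :
    B x y * C z w = ε * (B y x * C w z) := by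
  simpa [mul_comm] using h (x ⊗ₜ z) (y ⊗ₜ w)

end IsEpsSymmetric

end Semiring

variable [CommRing R] [NoZeroDivisors R] [Module R M] [Module R N]

theorem exists_sign_isEpsSymmetric_of_mul_eq_mul_swap {B : BilinForm R M} {p q : R}
    (hp : p ≠ 0) (h : ∀ x y, p * B x y = q * B y x) :
    ∃ ε : R, (ε = 1 ∨ ε = -1) ∧ IsEpsSymmetric ε B := by
  by_cases hB : B = 0
  · exact ⟨1, .inl rfl, fun x y => by simp [hB]⟩
  obtain ⟨a, b, hab⟩ := exists_apply_apply_ne_zero hB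
  have hsq : q ^ 2 = p ^ 2 := by
    apply mul_right_cancel₀ hab
    linear_combination -p * h a b - q * h b a
  rcases sq_eq_sq_iff_eq_or_eq_neg.mp hsq with rfl | rfl
  · refine ⟨1, .inl rfl, fun x y => mul_left_cancel₀ hp ?_⟩
    linear_combination h x y
  · refine ⟨-1, .inr rfl, fun x y => mul_left_cancel₀ hp ?_⟩
    linear_combination h x y

namespace IsEpsSymmetric

variable {ε : R} {B : BilinForm R M} {C : BilinForm R N}

theorem exists_sign_left_of_tmul (hC : C ≠ 0) (h : IsEpsSymmetric ε (B.tmul C)) :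
    ∃ ε₁ : R, (ε₁ = 1 ∨ ε₁ = -1) ∧ IsEpsSymmetric ε₁ B := by
  obtain ⟨z, w, hzw⟩ := exists_apply_apply_ne_zero hC
  apply exists_sign_isEpsSymmetric_of_mul_eq_mul_swap (q := ε * C w z) hzw
  intro x y
  linear_combination h.apply_mul_apply_of_tmul x y z w

theorem exists_sign_right_of_tmul (hB : B ≠ 0) (h : IsEpsSymmetric ε (B.tmul C)) :
    ∃ ε₂ : R, (ε₂ = 1 ∨ ε₂ = -1) ∧ IsEpsSymmetric ε₂ C := by
  obtain ⟨x, y, hxy⟩ := exists_apply_apply_ne_zero hB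
  apply exists_sign_isEpsSymmetric_of_mul_eq_mul_swap (q := ε * B y x) hxy
  intro z w
  linear_combination h.apply_mul_apply_of_tmul x y z w

end IsEpsSymmetric

theorem sign_symmetric_of_tensor_sign_symmetric_general {ε : R}
    {B : BilinForm R M} {C : BilinForm R N} (hB : B ≠ 0) (hC : C ≠ 0)
    (h : IsEpsSymmetric ε (B.tmul C)) :
    ∃ ε₁ ε₂ : R, (ε₁ = 1 ∨ ε₁ = -1) ∧ (ε₂ = 1 ∨ ε₂ = -1) ∧ ε₁ * ε₂ = ε ∧
      IsEpsSymmetric ε₁ B ∧ IsEpsSymmetric ε₂ C := by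
  obtain ⟨ε₁, hε₁, hBε₁⟩ := h.exists_sign_left_of_tmul hC
  obtain ⟨ε₂, hε₂, hCε₂⟩ := h.exists_sign_right_of_tmul hB
  have hε : ε₁ * ε₂ = ε := (hBε₁.tmul hCε₂).unique (bilinForm_tmul_ne_zero hB hC) h
  exact ⟨ε₁, ε₂, hε₁, hε₂, hε, hBε₁, hCε₂⟩

end EpsSymmetric

/-- Let `k` be a field of characteristic different from `2`, let `ε ∈ {+1, −1}`, and let
`τ` and `W` be nonzero finite-dimensional `k`-vector spaces.  Suppose given bilinear forms
`⟨·,·⟩_τ` on `τ` and `⟨·,·⟩_W` on `W`, both nondegenerate (perfect, i.e. the induced maps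
to the dual spaces are bijective), such that the bilinear form `B` on `τ ⊗_k W` determined
by `B(v₁ ⊗ w₁, v₂ ⊗ w₂) = ⟨v₁, v₂⟩_τ · ⟨w₁, w₂⟩_W` is `ε`-symmetric.  Then there exist
signs `ε_τ, ε_W ∈ {+1, −1}` with `ε_τ · ε_W = ε` such that `⟨·,·⟩_τ` is `ε_τ`-symmetric
and `⟨·,·⟩_W` is `ε_W`-symmetric. -/
theorem sign_symmetric_of_tensor_sign_symmetric {k : Type*} [Field k] (h2 : (2 : k) ≠ 0)
    (ε : k) (hε : ε = 1 ∨ ε = -1)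
    {τ W : Type*} [AddCommGroup τ] [AddCommGroup W] [Module k τ] [Module k W]
    [FiniteDimensional k τ] [FiniteDimensional k W] [Nontrivial τ] [Nontrivial W]
    (Bτ : LinearMap.BilinForm k τ) (BW : LinearMap.BilinForm k W)
    (hBτ : Function.Bijective Bτ) (hBW : Function.Bijective BW)
    (hsym : ∀ x y : τ ⊗[k] W,
      LinearMap.BilinForm.tmul Bτ BW x y = ε * LinearMap.BilinForm.tmul Bτ BW y x) :
    ∃ ετ εW : k, (ετ = 1 ∨ ετ = -1) ∧ (εW = 1 ∨ εW = -1) ∧ ετ * εW = ε ∧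
      (∀ v₁ v₂ : τ, Bτ v₁ v₂ = ετ * Bτ v₂ v₁) ∧
      (∀ w₁ w₂ : W, BW w₁ w₂ = εW * BW w₂ w₁) := by
  exact sign_symmetric_of_tensor_sign_symmetric_general
    (ne_zero_of_injective hBτ.injective) (ne_zero_of_injective hBW.injective) hsym
end

section
/- Let k be a field of characteristic p > 0 and Λ a finite group with p ∤ |Λ|. If V is a finite-dimensional absolutely irreducible representation of Λ over k, then p does not divide dim_k V. -/
/-!
Take a `k`-linear endomorphism `f` of `V` of trace `1` and average it without dividing: the sum of
its conjugates by the elements of `Λ` commutes with `Λ`, hence is a scalar `c`. Comparing traces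
gives `c * dim V = |Λ|` in `k`. So if `dim V` vanishes in `k`, then so does `|Λ|`.
-/

open Module MonoidAlgebra

theorem surjective_trace {R M : Type*} [CommRing R] [AddCommGroup M] [Module R M]
    [Module.Free R M] [Module.Finite R M] [Nontrivial M] :
    Function.Surjective (LinearMap.trace R M) := by
  intro r
  let b := Free.chooseBasis R M
  obtain ⟨i⟩ := b.index_nonempty
  exact ⟨(b.coord i).smulRight (r • b i), by simp [LinearMap.trace_smulRight]⟩

section Conjugates

variable {k G V : Type*} [CommRing k] [Group G] [AddCommGroup V] [Module k V] [Module k[G] V]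
  [IsScalarTower k k[G] V]

theorem trace_conjugate (f : V →ₗ[k] V) (g : G) :
    LinearMap.trace k V (f.conjugate g) = LinearMap.trace k V f := by
  have action_mul_action_inv : GroupSMul.linearMap k V g * GroupSMul.linearMap k V g⁻¹ = 1 := by
    ext x
    simp [smul_smul, single_mul_single, ← one_def]
  calc LinearMap.trace k V (f.conjugate g)
      = LinearMap.trace k V (GroupSMul.linearMap k V g⁻¹ * (f * GroupSMul.linearMap k V g)) := rfl
    _ = LinearMap.trace k V (f * (GroupSMul.linearMap k V g * GroupSMul.linearMap k V g⁻¹)) := by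
      rw [LinearMap.trace_mul_comm, mul_assoc]
    _ = LinearMap.trace k V f := by rw [action_mul_action_inv, mul_one]

theorem trace_sumOfConjugates [Fintype G] (f : V →ₗ[k] V) :
    LinearMap.trace k V (f.sumOfConjugates G) = Nat.card G * LinearMap.trace k V f := by
  simp [LinearMap.sumOfConjugates, trace_conjugate]

theorem natCast_finrank_dvd_natCast_card [Finite G] [Module.Free k V] [Module.Finite k V]
    [Nontrivial V] (hscalar : ∀ f : V →ₗ[k[G]] V, ∃ c : k, ∀ x, f x = c • x) :
    (finrank k V : k) ∣ (Nat.card G : k) := by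
  have := Fintype.ofFinite G
  obtain ⟨f, hf⟩ := surjective_trace (R := k) (M := V) 1
  obtain ⟨c, hc⟩ := hscalar (f.sumOfConjugatesEquivariant G)
  have sum_eq : f.sumOfConjugates G = c • LinearMap.id := LinearMap.ext hc
  refine Dvd.intro_left c ?_
  calc c * (finrank k V : k)
      = LinearMap.trace k V (f.sumOfConjugates G) := by
        rw [sum_eq, map_smul, LinearMap.trace_id, smul_eq_mul]
    _ = Nat.card G := by rw [trace_sumOfConjugates, hf, mul_one]

theorem not_dvd_finrank_of_absolutely_irreducible_general (p : ℕ) [CharP k p] [Finite G]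
    (hG : ¬ p ∣ Nat.card G) [Module.Free k V] [Module.Finite k V] [Nontrivial V]
    (hscalar : ∀ f : V →ₗ[k[G]] V, ∃ c : k, ∀ x, f x = c • x) :
    ¬ p ∣ finrank k V := by
  rw [← CharP.cast_eq_zero_iff k p] at hG ⊢
  exact fun hdim ↦ hG <| zero_dvd_iff.mp <| hdim ▸ natCast_finrank_dvd_natCast_card hscalar

end Conjugates

/-- Let `k` be a field of characteristic `p > 0` and `Λ` a finite group with `p ∤ |Λ|`.
If `V` is a finite-dimensional absolutely irreducible representation of `Λ` over `k`
(irreducible with all `k[Λ]`-endomorphisms scalar), then `p` does not divide `dim_k V`. -/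
theorem not_dvd_finrank_of_absolutely_irreducible {k : Type*} [Field k]
    (p : ℕ) [CharP k p] (hp : 0 < p)
    {Λ : Type*} [Group Λ] [Finite Λ] (hΛ : ¬ p ∣ Nat.card Λ)
    {V : Type*} [AddCommGroup V] [Module (MonoidAlgebra k Λ) V] [Module k V]
    [IsScalarTower k (MonoidAlgebra k Λ) V] [FiniteDimensional k V]
    (hsimple : IsSimpleModule (MonoidAlgebra k Λ) V)
    (habs : ∀ f : V →ₗ[MonoidAlgebra k Λ] V, ∃ c : k, ∀ x, f x = c • x) :
    ¬ p ∣ Module.finrank k V := by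
  have := IsSimpleModule.nontrivial (MonoidAlgebra k Λ) V
  exact not_dvd_finrank_of_absolutely_irreducible_general p hΛ habs
end

section
/- Let O be a commutative Noetherian local ring with maximal ideal 𝔪 and residue field k of characteristic p > 0, and let Λ be a finite group with p ∤ |Λ|. Let M be a nonzero O[Λ]-module that is finite free as an O-module and whose reduction M/𝔪M is an absolutely irreducible k[Λ]-module. Then the natural map O → End_{O[Λ]}(M) given by scalar multiplication is an isomorphism. -/
/-!
Averaging over `Λ`, whose order is a unit of `O`, shows that `M` is projective over `O[Λ]`. For a
finite projective module `M` over any `O`-algebra `A`, the maps in `End_A(M)` are reconstructed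
`O`-linearly from their values on finitely many vectors. Hence `End_A(M)` is finite over `O`, and an
endomorphism with values in `𝔪M` lies in `𝔪 End_A(M)`. If the endomorphisms of `M/𝔪M` are scalars,
this gives `End_A(M) = O · id + 𝔪 End_A(M)`, and Nakayama's lemma removes the second summand.
-/

section Averaging

variable {k G : Type*} [CommRing k] [Group G]

theorem map_equivariantProjection_of_rightInverse [Fintype G] (hG : IsUnit (Nat.card G : k))
    {V W : Type*} [AddCommGroup V] [Module k V] [Module (MonoidAlgebra k G) V]
    [IsScalarTower k (MonoidAlgebra k G) V] [AddCommGroup W] [Module k W]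
    [Module (MonoidAlgebra k G) W] [IsScalarTower k (MonoidAlgebra k G) W]
    (π : V →ₗ[MonoidAlgebra k G] W) (s : W →ₗ[k] V) (hs : Function.RightInverse s π) (w : W) :
    π (s.equivariantProjection G w) = w := by
  have map_conjugate (g : G) : π (s.conjugate g w) = w := by
    rw [LinearMap.conjugate_apply, map_smul, hs, smul_smul, MonoidAlgebra.single_mul_single,
      inv_mul_cancel, mul_one, ← MonoidAlgebra.one_def, one_smul]
  rw [LinearMap.equivariantProjection_apply, LinearMap.map_smul_of_tower, map_sum]
  simp only [map_conjugate]
  rw [Finset.sum_const, Finset.card_univ, ← Nat.cast_smul_eq_nsmul k, smul_smul,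
    Fintype.card_eq_nat_card, Ring.inverse_mul_cancel _ hG, one_smul]

theorem projective_monoidAlgebra_of_isUnit_card_s13 [Finite G] (hG : IsUnit (Nat.card G : k))
    (V : Type*) [AddCommGroup V] [Module k V] [Module (MonoidAlgebra k G) V]
    [IsScalarTower k (MonoidAlgebra k G) V] [Module.Projective k V] :
    Module.Projective (MonoidAlgebra k G) V := by
  have := Fintype.ofFinite G
  refine .of_lifting_property'' fun π hπ ↦ ?_
  obtain ⟨s, hs⟩ := Module.projective_lifting_property (π.restrictScalars k) .id hπ
  exact ⟨s.equivariantProjection G, LinearMap.ext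
    (map_equivariantProjection_of_rightInverse hG π s (LinearMap.congr_fun hs))⟩

end Averaging

theorem isUnit_natCast_iff_not_dvd {R : Type*} [CommRing R] [IsLocalRing R] (p : ℕ)
    [CharP (R ⧸ IsLocalRing.maximalIdeal R) p] {n : ℕ} : IsUnit (n : R) ↔ ¬ p ∣ n := by
  rw [← IsLocalRing.notMem_maximalIdeal, ← Ideal.Quotient.eq_zero_iff_mem, map_natCast,
    CharP.cast_eq_zero_iff _ p]

section ExtensionOfScalars

open scoped Pointwise

variable {R A M : Type*} [CommSemiring R] [Semiring A] [Algebra R A] [AddCommMonoid M]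
  [Module A M] [Module R M] [IsScalarTower R A M]

theorem idealMap_smul_eq_set_smul (I : Ideal R) (N : Submodule A M) :
    I.map (algebraMap R A) • N = (I : Set R) • N := by
  refine le_antisymm (Submodule.smul_le.mpr fun r hr x hx ↦ ?_)
    (Submodule.set_smul_le _ _ _ fun a x ha hx ↦ ?_)
  · have map_le : I.map (algebraMap R A) ≤
        ((I : Set R) • N).comap (LinearMap.toSpanSingleton A M x) := by
      refine Ideal.map_le_iff_le_comap.mpr fun a ha ↦ ?_
      simpa using Submodule.mem_set_smul_of_mem_mem (s := (I : Set R)) ha hx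
    exact map_le hr
  · rw [← algebraMap_smul A a x]
    exact Submodule.smul_mem_smul (Ideal.mem_map_of_mem _ ha) hx

-- Mathlib's `Submodule.restrictScalars_map_smul_eq` requires `A` to be commutative, which excludes
-- group algebras.
theorem restrictScalars_idealMap_smul (I : Ideal R) (N : Submodule A M) :
    (I.map (algebraMap R A) • N).restrictScalars R = I • N.restrictScalars R := by
  rw [idealMap_smul_eq_set_smul, ← Submodule.coe_set_smul, Submodule.set_smul_eq_iSup,
    Submodule.set_smul_eq_iSup]
  exact map_iSup₂ (Submodule.restrictScalarsLatticeHom R A M) _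

end ExtensionOfScalars

section FiniteProjective

variable (R A M N : Type*) [Semiring A] [AddCommMonoid M] [Module A M] [Module.Finite A M]
  [Module.Projective A M] [AddCommMonoid N] [Module A N]

theorem exists_linearMap_pi_apply_comp_eq [Semiring R] [Module R N] [SMulCommClass A R N] :
    ∃ (n : ℕ) (v : Fin n → M) (Φ : (Fin n → N) →ₗ[R] M →ₗ[A] N),
      ∀ f : M →ₗ[A] N, Φ (f ∘ v) = f := by
  obtain ⟨n, π, s, -, -, hπs⟩ := Module.Finite.exists_comp_eq_id_of_projective A M
  refine ⟨n, fun i ↦ π (Pi.single i 1),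
    LinearMap.lcomp R N s ∘ₗ (LinearEquiv.piRing A N (Fin n) R).symm.toLinearMap, fun f ↦ ?_⟩
  calc (LinearEquiv.piRing A N (Fin n) R).symm (LinearEquiv.piRing A N (Fin n) R (f ∘ₗ π)) ∘ₗ s
      = f ∘ₗ π ∘ₗ s := by rw [LinearEquiv.symm_apply_apply, LinearMap.comp_assoc]
    _ = f := by rw [hπs, LinearMap.comp_id]

theorem finite_linearMap_of_projective [Semiring R] [Module R N] [SMulCommClass A R N]
    [Module.Finite R N] : Module.Finite R (M →ₗ[A] N) := by
  obtain ⟨n, v, Φ, hΦ⟩ := exists_linearMap_pi_apply_comp_eq R A M N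
  exact .of_surjective Φ fun f ↦ ⟨f ∘ v, hΦ f⟩

variable {R A M N}

theorem mem_smul_top_of_forall_apply_mem [CommSemiring R] [Module R N] [SMulCommClass A R N]
    (I : Ideal R) (f : M →ₗ[A] N) (hf : ∀ x, f x ∈ I • (⊤ : Submodule R N)) :
    f ∈ I • (⊤ : Submodule R (M →ₗ[A] N)) := by
  obtain ⟨n, v, Φ, hΦ⟩ := exists_linearMap_pi_apply_comp_eq R A M N
  have f_eq_sum : f = ∑ i, (Φ ∘ₗ LinearMap.single R (fun _ ↦ N) i) (f (v i)) := by
    conv_lhs => rw [← hΦ f, ← Finset.univ_sum_single (f ∘ v), map_sum]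
    rfl
  rw [f_eq_sum]
  exact sum_mem fun i _ ↦ Submodule.smul_top_le_comap_smul_top I _ (hf (v i))

end FiniteProjective

section ScalarEndomorphisms

variable {R A M : Type*} [CommRing R] [Ring A] [Algebra R A] [AddCommGroup M] [Module A M]
  [Module R M] [IsScalarTower R A M] [Module.Projective A M]

theorem exists_sub_smul_id_mem_smul_top [Module.Finite A M] (I : Ideal R)
    (hscalar : ∀ f : Module.End A (M ⧸ (I.map (algebraMap R A) • (⊤ : Submodule A M))),
      ∃ c : R, ∀ x, f x = algebraMap R A c • x) (f : M →ₗ[A] M) :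
    ∃ c : R, f - c • LinearMap.id ∈ I • (⊤ : Submodule R (M →ₗ[A] M)) := by
  obtain ⟨c, hc⟩ := hscalar (Submodule.mapQ _ _ f (Submodule.smul_top_le_comap_smul_top _ f))
  refine ⟨c, mem_smul_top_of_forall_apply_mem I _ fun x ↦ ?_⟩
  have sub_mem_map_smul : f x - c • x ∈ I.map (algebraMap R A) • (⊤ : Submodule A M) := by
    rw [← algebraMap_smul A c x, ← Submodule.Quotient.eq]
    exact hc (Submodule.Quotient.mk x)
  rwa [← Submodule.restrictScalars_mem R, restrictScalars_idealMap_smul,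
    Submodule.restrictScalars_top] at sub_mem_map_smul

theorem scalar_to_end_bijective_general [Module.Finite R M] [FaithfulSMul R M] (I : Ideal R)
    (hI : I ≤ Ideal.jacobson ⊥)
    (hscalar : ∀ f : Module.End A (M ⧸ (I.map (algebraMap R A) • (⊤ : Submodule A M))),
      ∃ c : R, ∀ x, f x = algebraMap R A c • x) :
    Function.Bijective (fun c : R ↦ (c • LinearMap.id : M →ₗ[A] M)) := by
  have : Module.Finite A M := .of_restrictScalars_finite R A M
  have : Module.Finite R (M →ₗ[A] M) := finite_linearMap_of_projective R A M M
  have top_le_sup : (⊤ : Submodule R (M →ₗ[A] M)) ≤ Submodule.span R {LinearMap.id} ⊔ I • ⊤ := by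
    intro f _
    obtain ⟨c, hc⟩ := exists_sub_smul_id_mem_smul_top I hscalar f
    rw [← add_sub_cancel (c • LinearMap.id) f]
    exact Submodule.add_mem_sup
      (Submodule.smul_mem _ c (Submodule.mem_span_singleton_self LinearMap.id)) hc
  have top_le_span :=
    Submodule.le_of_le_smul_of_le_jacobson_bot Module.Finite.fg_top hI top_le_sup
  constructor
  · intro a b hab
    exact FaithfulSMul.eq_of_smul_eq_smul (α := M) (LinearMap.congr_fun hab)
  · exact fun f ↦ Submodule.mem_span_singleton.mp (top_le_span (Submodule.mem_top (x := f)))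

end ScalarEndomorphisms

/-- Let `O` be a commutative Noetherian local ring with maximal ideal `𝔪` and residue field
`k` of characteristic `p > 0`, and let `Λ` be a finite group with `p ∤ |Λ|`.  Let `M` be a
nonzero `O[Λ]`-module that is finite free as an `O`-module and whose reduction `M/𝔪M` is an
absolutely irreducible `k[Λ]`-module.  Then the natural map `O → End_{O[Λ]}(M)` given by
scalar multiplication is an isomorphism. -/
theorem scalar_to_end_bijective {O : Type*} [CommRing O] [IsNoetherianRing O] [IsLocalRing O]
    (p : ℕ) (hp : 0 < p) [CharP (O ⧸ IsLocalRing.maximalIdeal O) p]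
    {Λ : Type*} [Group Λ] [Finite Λ] (hΛ : ¬ p ∣ Nat.card Λ)
    {M : Type*} [AddCommGroup M] [Nontrivial M]
    [Module (MonoidAlgebra O Λ) M] [Module O M] [IsScalarTower O (MonoidAlgebra O Λ) M]
    [Module.Finite O M] [Module.Free O M]
    -- the reduction `M/𝔪M` is irreducible ...
    (hsimple : IsSimpleModule (MonoidAlgebra O Λ)
      (M ⧸ ((IsLocalRing.maximalIdeal O).map (algebraMap O (MonoidAlgebra O Λ)) •
        (⊤ : Submodule (MonoidAlgebra O Λ) M))))
    -- ... and absolutely irreducible: all its `k[Λ]`-endomorphisms are scalars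
    (habs : ∀ f : (M ⧸ ((IsLocalRing.maximalIdeal O).map (algebraMap O (MonoidAlgebra O Λ)) •
          (⊤ : Submodule (MonoidAlgebra O Λ) M)))
        →ₗ[MonoidAlgebra O Λ]
        (M ⧸ ((IsLocalRing.maximalIdeal O).map (algebraMap O (MonoidAlgebra O Λ)) •
          (⊤ : Submodule (MonoidAlgebra O Λ) M))),
      ∃ c : O, ∀ x, f x = algebraMap O (MonoidAlgebra O Λ) c • x) :
    Function.Bijective
      (fun c : O => (c • LinearMap.id : M →ₗ[MonoidAlgebra O Λ] M)) := by
  have : Module.Projective (MonoidAlgebra O Λ) M :=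
    projective_monoidAlgebra_of_isUnit_card_s13 ((isUnit_natCast_iff_not_dvd p).mpr hΛ) M
  exact scalar_to_end_bijective_general _ (IsLocalRing.maximalIdeal_le_jacobson ⊥) habs
end

section
/- Let R be a commutative ring containing elements i and s with i² = −1 and s² = 2, with 2 invertible in R. Let G ∈ Mat_m(R) be a symmetric invertible matrix that is a signed permutation matrix, i.e., each row of G has exactly one nonzero entry, and that entry equals 1 or −1. Then there exists P ∈ GL_m(R) with Pᵀ G P = J_m, where J_m is the antidiagonal identity matrix with (J_m)_{ij} = 1 if i + j = m + 1 and 0 otherwise. In other words, the symmetric bilinear form on R^m with Gram matrix G is equivalent over R to the standard symmetric pairing with Gram matrix J_m. -/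
/-!
If `a ^ 2 = 1`, then `(1 + a) / 2` and `(1 - a) / 2` are complementary idempotents, so
`(1 + a) / 2 + i (1 - a) / 2` squares to `(1 + a) / 2 - (1 - a) / 2 = a`. When `a` is a symmetric
matrix, so is this root `Q`, and `a = Qᵀ Q` is congruent to the identity. Both `G` and the
antidiagonal identity are symmetric involutions, hence congruent to each other.
-/

section Congruence

open Matrix

variable {R n : Type*} [CommRing R] [Fintype n] [DecidableEq n]

/-- The square root `(1 + a) / 2 + i (1 - a) / 2` of an involution `a`, where `i ^ 2 = -1`. It is
defined for every `a`, but squares to `a` only under `a ^ 2 = 1`. -/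
def involutionSqrt {A : Type*} [Ring A] [Module R A] [Invertible (2 : R)] (i : R) (a : A) : A :=
  ⅟(2 : R) • ((1 + a) + i • (1 - a))

theorem involutionSqrt_sq {A : Type*} [Ring A] [Algebra R A] [Invertible (2 : R)]
    {i : R} (hi : i ^ 2 = -1) {a : A} (ha : a ^ 2 = 1) : involutionSqrt i a ^ 2 = a := by
  have h_one : Commute 1 a := .one_left a
  have h_plus : (1 + a) ^ 2 = (2 : R) • (1 + a) := by
    simp only [h_one.add_sq, ha, one_pow, mul_one, two_mul, two_smul]
    abel
  have h_minus : (1 - a) ^ 2 = (2 : R) • (1 - a) := by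
    simp only [h_one.sub_sq, ha, one_pow, mul_one, two_mul, two_smul]
    abel
  have h_orth : (1 + a) * (1 - a) = 0 := by
    rw [← h_one.sq_sub_sq, ha, one_pow, sub_self]
  have h_comm : Commute (1 + a) (i • (1 - a)) :=
    ((Commute.one_right _).sub_right (h_one.add_left (.refl a))).smul_right i
  have h_root : ((1 + a) + i • (1 - a)) ^ 2 = (2 : R) • (2 : R) • a := by
    calc ((1 + a) + i • (1 - a)) ^ 2
        = (1 + a) ^ 2 + i ^ 2 • (1 - a) ^ 2 := by
          rw [h_comm.add_sq, smul_pow, mul_assoc, mul_smul_comm, h_orth, smul_zero, mul_zero,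
            add_zero]
      _ = (2 : R) • (1 + a) - (2 : R) • (1 - a) := by
          rw [h_plus, h_minus, hi, neg_one_smul, ← sub_eq_add_neg]
      _ = (2 : R) • (2 : R) • a := by module
  rw [involutionSqrt, smul_pow, h_root, sq, mul_smul, invOf_smul_smul, invOf_smul_smul]

theorem isUnit_involutionSqrt {A : Type*} [Ring A] [Algebra R A] [Invertible (2 : R)]
    {i : R} (hi : i ^ 2 = -1) {a : A} (ha : a ^ 2 = 1) : IsUnit (involutionSqrt i a) := by
  rw [← isUnit_pow_iff two_ne_zero, involutionSqrt_sq hi ha]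
  exact .of_pow_eq_one ha two_ne_zero

theorem isSymm_involutionSqrt [Invertible (2 : R)] (i : R) {G : Matrix n n R} (hG : G.IsSymm) :
    (involutionSqrt i G).IsSymm :=
  ((isSymm_one.add hG).add ((isSymm_one.sub hG).smul i)).smul _

theorem exists_isUnit_transpose_mul_self_eq (h2 : IsUnit (2 : R)) {i : R} (hi : i ^ 2 = -1)
    {G : Matrix n n R} (hG : G.IsSymm) (hG2 : G ^ 2 = 1) : ∃ Q, IsUnit Q ∧ Qᵀ * Q = G := by
  let := h2.invertible
  refine ⟨involutionSqrt i G, isUnit_involutionSqrt hi hG2, ?_⟩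
  rw [(isSymm_involutionSqrt i hG).eq, ← sq, involutionSqrt_sq hi hG2]

theorem exists_isUnit_congr_transpose_mul_self {Q S : Matrix n n R} (hQ : IsUnit Q)
    (hS : IsUnit S) : ∃ P, IsUnit P ∧ Pᵀ * (Qᵀ * Q) * P = Sᵀ * S := by
  obtain ⟨T, hQT⟩ := hQ.exists_right_inv
  refine ⟨T * S, (IsUnit.of_mul_eq_one_right Q hQT).mul hS, ?_⟩
  calc (T * S)ᵀ * (Qᵀ * Q) * (T * S)
      = (Q * T * S)ᵀ * (Q * T * S) := by simp only [transpose_mul, Matrix.mul_assoc]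
    _ = Sᵀ * S := by rw [hQT, Matrix.one_mul]

theorem exists_isUnit_congr_of_isSymm_of_sq_eq_one (h2 : IsUnit (2 : R)) {i : R}
    (hi : i ^ 2 = -1) {G H : Matrix n n R} (hG : G.IsSymm) (hG2 : G ^ 2 = 1)
    (hH : H.IsSymm) (hH2 : H ^ 2 = 1) : ∃ P, IsUnit P ∧ Pᵀ * G * P = H := by
  obtain ⟨Q, hQ, rfl⟩ := exists_isUnit_transpose_mul_self_eq h2 hi hG hG2
  obtain ⟨S, hS, rfl⟩ := exists_isUnit_transpose_mul_self_eq h2 hi hH hH2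
  exact exists_isUnit_congr_transpose_mul_self hQ hS

end Congruence

section SignedPermutation

open Matrix

theorem sq_eq_one_of_isSymm_of_monomial_rows {R n : Type*} [Semiring R] [Fintype n] [DecidableEq n]
    {G : Matrix n n R} (hG : G.IsSymm)
    (hrows : ∀ r, ∃ c, G r c ^ 2 = 1 ∧ ∀ c' ≠ c, G r c' = 0) : G ^ 2 = 1 := by
  ext r t
  obtain ⟨c, hrc, hr⟩ := hrows r
  obtain ⟨d, -, hc⟩ := hrows c
  have h_entry : (G ^ 2) r t = G r c * G c t := by
    rw [sq, mul_apply]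
    exact Fintype.sum_eq_single c fun b hb => by rw [hr b hb, zero_mul]
  rw [h_entry]
  obtain rfl | hrt := eq_or_ne r t
  · rw [hG.apply r c, ← sq, hrc, one_apply_eq]
  · -- Row `c` is supported at the single index `d`, which cannot be both `r` and `t`.
    rw [one_apply_ne hrt]
    obtain rfl | htd := eq_or_ne t d
    · rw [hG.apply c r, hc r hrt, zero_mul]
    · rw [hc t htd, mul_zero]

theorem isSymm_permMatrix {R n : Type*} [Zero R] [One R] [DecidableEq n] {σ : Equiv.Perm n}
    (hσ : σ⁻¹ = σ) : (σ.permMatrix R).IsSymm := by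
  rw [IsSymm, transpose_permMatrix, hσ]

theorem permMatrix_sq_eq_one {R n : Type*} [Semiring R] [Fintype n] [DecidableEq n]
    {σ : Equiv.Perm n} (hσ : σ⁻¹ = σ) : σ.permMatrix R ^ 2 = 1 := by
  rw [sq, ← permMatrix_mul, inv_eq_iff_mul_eq_one.mp hσ, permMatrix_one]

theorem permMatrix_revPerm (R : Type*) [Zero R] [One R] (m : ℕ) :
    Fin.revPerm.permMatrix R =
      of (fun a b : Fin m => if (a : ℕ) + (b : ℕ) + 1 = m then (1 : R) else 0) := by
  ext a b
  have h_rev : a.rev = b ↔ (a : ℕ) + b + 1 = m := by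
    rw [Fin.ext_iff, Fin.val_rev]
    omega
  simp [Equiv.toPEquiv_apply, PEquiv.toMatrix_apply, h_rev]

end SignedPermutation

theorem symm_signed_perm_equiv_standard_general {R : Type*} [CommRing R] {i : R}
    (hi : i ^ 2 = -1) (h2 : IsUnit (2 : R)) {m : ℕ} {G : Matrix (Fin m) (Fin m) R}
    (hsymm : G.IsSymm) (hG2 : G ^ 2 = 1) :
    ∃ P : Matrix (Fin m) (Fin m) R, IsUnit P ∧
      P.transpose * G * P =
        Matrix.of (fun a b : Fin m => if (a : ℕ) + (b : ℕ) + 1 = m then (1 : R) else 0) := by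
  have hrev : (Fin.revPerm : Equiv.Perm (Fin m))⁻¹ = Fin.revPerm := Fin.revPerm_symm
  rw [← permMatrix_revPerm]
  exact exists_isUnit_congr_of_isSymm_of_sq_eq_one h2 hi hsymm hG2
    (isSymm_permMatrix hrev) (permMatrix_sq_eq_one hrev)

/-- Let `R` be a commutative ring containing elements `i` and `s` with `i² = −1` and
`s² = 2`, with `2` invertible in `R`.  Let `G ∈ Mat_m(R)` be a symmetric invertible matrix
that is a signed permutation matrix, i.e. each row of `G` has exactly one nonzero entry,
and that entry equals `1` or `−1`.  Then there exists `P ∈ GL_m(R)` with `Pᵀ G P = J_m`,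
where `J_m` is the antidiagonal identity matrix: the symmetric bilinear form with Gram
matrix `G` is equivalent over `R` to the standard symmetric pairing. -/
theorem symm_signed_perm_equiv_standard {R : Type*} [CommRing R]
    (i s : R) (hi : i ^ 2 = -1) (hs : s ^ 2 = 2) (h2 : IsUnit (2 : R))
    {m : ℕ} (G : Matrix (Fin m) (Fin m) R)
    (hsymm : G.transpose = G) (hGunit : IsUnit G)
    (hsigned : ∀ r : Fin m, ∃ c : Fin m,
      (G r c = 1 ∨ G r c = -1) ∧ ∀ c' : Fin m, c' ≠ c → G r c' = 0) :
    ∃ P : Matrix (Fin m) (Fin m) R, IsUnit P ∧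
      P.transpose * G * P =
        Matrix.of (fun a b : Fin m => if (a : ℕ) + (b : ℕ) + 1 = m then (1 : R) else 0) := by
  exact symm_signed_perm_equiv_standard_general hi h2 hsymm <|
    sq_eq_one_of_isSymm_of_monomial_rows hsymm fun r =>
      (hsigned r).imp fun _ ⟨hc, hzero⟩ => ⟨by rcases hc with h | h <;> simp [h], hzero⟩
end

section
/- Let R be a commutative ring and let m = 2n be even. Let G ∈ Mat_m(R) be an invertible alternating matrix (Gᵀ = −G with zero diagonal) that is a signed permutation matrix, i.e., each row of G has exactly one nonzero entry, and that entry equals 1 or −1. Then there exists P ∈ GL_m(R) with Pᵀ G P = Ω_m, where Ω_m is the standard symplectic Gram matrix given in n×n blocks by Ω_m = [[0, J_n], [−J_n, 0]] with J_n the antidiagonal identity matrix. -/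
/-!
An alternating monomial matrix `G` has a single unit `G a (σ a)` in each row, and skew-symmetry and
the zero diagonal make `σ` a fixed-point-free involution. Any two such involutions of a finite set
have cycle type `(2, …, 2)`, so they are conjugate; relabelling the basis by a conjugating
permutation makes two alternating monomial matrices have the same support. It then remains to
rescale one basis vector in each pair `{a, σ a}` to make the units agree. Since `Ω` is itself an
alternating monomial matrix, every alternating monomial matrix of its size is equivalent to it.
-/

open Equiv Function Matrix

section FixedPointFreeInvolution

variable {ι : Type*} {σ τ : Perm ι}

theorem cycleType_eq_replicate_two_of_involutive_of_forall_ne [Fintype ι] [DecidableEq ι]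
    (hσ : Involutive σ) (hσ_ne : ∀ a, σ a ≠ a) :
    σ.cycleType = Multiset.replicate (Fintype.card ι / 2) 2 := by
  have hsq : σ ^ 2 = 1 := Perm.ext fun a => by simp [pow_two, hσ a]
  have hrep := Perm.cycleType_of_pow_prime_eq_one hsq
  have hsupport : σ.support = Finset.univ := by ext a; simp [hσ_ne a]
  have hsum : σ.cycleType.card * 2 = Fintype.card ι := by
    rw [← Finset.card_univ, ← hsupport, ← σ.sum_cycleType, hrep]
    simp
  rwa [← hsum, Nat.mul_div_cancel _ two_pos]

theorem isConj_of_involutive_of_forall_ne [Finite ι] (hσ : Involutive σ)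
    (hσ_ne : ∀ a, σ a ≠ a) (hτ : Involutive τ) (hτ_ne : ∀ a, τ a ≠ a) : IsConj σ τ := by
  classical
  have := Fintype.ofFinite ι
  rw [Perm.isConj_iff_cycleType_eq,
    cycleType_eq_replicate_two_of_involutive_of_forall_ne hσ hσ_ne,
    cycleType_eq_replicate_two_of_involutive_of_forall_ne hτ hτ_ne]

end FixedPointFreeInvolution

section Congruence

variable {ι R : Type*} [Fintype ι] [DecidableEq ι] [CommRing R] {G H K : Matrix ι ι R}

/-- Congruence of square matrices, that is, equivalence of the bilinear forms of which they are
the Gram matrices. -/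
def IsCongruent (G H : Matrix ι ι R) : Prop :=
  ∃ P : Matrix ι ι R, IsUnit P ∧ Pᵀ * G * P = H

theorem IsCongruent.trans (hGH : IsCongruent G H) (hHK : IsCongruent H K) : IsCongruent G K := by
  obtain ⟨P, hP, rfl⟩ := hGH
  obtain ⟨Q, hQ, rfl⟩ := hHK
  exact ⟨P * Q, hP.mul hQ, by simp only [transpose_mul, Matrix.mul_assoc]⟩

theorem isCongruent_submatrix (G : Matrix ι ι R) (f : Perm ι) :
    IsCongruent G (G.submatrix f f) := by
  refine ⟨f⁻¹.permMatrix R, (Group.isUnit f).map (permMatrixHom (R := R)), ?_⟩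
  rw [transpose_permMatrix, inv_inv, PEquiv.toMatrix_toPEquiv_mul, PEquiv.mul_toMatrix_toPEquiv]
  rfl

theorem isCongruent_of_units_mul_apply_mul (d : ι → Rˣ) (h : ∀ a b, d a * G a b * d b = H a b) :
    IsCongruent G H := by
  refine ⟨diagonal fun a => (d a : R), ?_, ?_⟩
  · exact isUnit_diagonal.2 (Pi.isUnit_iff.2 fun a => (d a).isUnit)
  · ext a b
    simp [h]

end Congruence

section Monomial

variable {ι R : Type*} [CommRing R] {G H : Matrix ι ι R} {σ : Perm ι}

/-- A monomial matrix with underlying permutation `σ`: row `a` has a unit in column `σ a` and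
zeros elsewhere. -/
structure IsMonomialAlong (σ : Perm ι) (G : Matrix ι ι R) : Prop where
  isUnit_apply : ∀ a, IsUnit (G a (σ a))
  apply_eq_zero : ∀ {a b}, b ≠ σ a → G a b = 0

theorem IsMonomialAlong.submatrix (hG : IsMonomialAlong σ G) (f : Perm ι) :
    IsMonomialAlong (f⁻¹ * σ * f) (G.submatrix f f) where
  isUnit_apply a := by simpa using hG.isUnit_apply (f a)
  apply_eq_zero {a b} hb := hG.apply_eq_zero fun h => hb (by simp [← h])

theorem IsMonomialAlong.isCongruent [Fintype ι] [DecidableEq ι] (hσ : Involutive σ)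
    (hσ_ne : ∀ a, σ a ≠ a) (hG : IsMonomialAlong σ G) (hG_skew : Gᵀ = -G)
    (hH : IsMonomialAlong σ H) (hH_skew : Hᵀ = -H) : IsCongruent G H := by
  have hG_neg (a b) : G b a = -G a b := congrFun₂ hG_skew a b
  have hH_neg (a b) : H b a = -H a b := congrFun₂ hH_skew a b
  choose u hu using hG.isUnit_apply
  choose v hv using hH.isUnit_apply
  let e := Fintype.equivFin ι
  -- The enumeration `e` selects the element of each pair `{a, σ a}` to be rescaled.
  let d : ι → Rˣ := fun a => if e a < e (σ a) then v a * (u a)⁻¹ else 1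
  have hd_of_lt {a} (ha : e a < e (σ a)) : d a * G a (σ a) * d (σ a) = H a (σ a) := by
    simp [d, ha, hσ a, ha.not_gt, ← hu, ← hv]
  refine isCongruent_of_units_mul_apply_mul d fun a b => ?_
  by_cases hb : b = σ a
  · subst hb
    rcases (e.injective.ne (hσ_ne a)).lt_or_gt with h | h
    · have hflip := hd_of_lt (a := σ a) (by rwa [hσ a])
      rw [hσ a, hG_neg a, hH_neg a] at hflip
      linear_combination -hflip
    · exact hd_of_lt h
  · simp [hG.apply_eq_zero hb, hH.apply_eq_zero hb]

end Monomial

section AlternatingMonomial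

variable {ι R : Type*} [CommRing R] {G H : Matrix ι ι R}

/-- An alternating matrix in which each row has a unit in one column and zeros elsewhere. Signed
permutation matrices are the case in which these units are `1` or `-1`. -/
structure IsAlternatingMonomial (G : Matrix ι ι R) : Prop where
  transpose_eq_neg : Gᵀ = -G
  diag_eq_zero : ∀ a, G a a = 0
  exists_isUnit : ∀ a, ∃ b, IsUnit (G a b) ∧ ∀ b', b' ≠ b → G a b' = 0

theorem IsAlternatingMonomial.exists_isMonomialAlong [Nontrivial R] (hG : IsAlternatingMonomial G) :
    ∃ σ : Perm ι, Involutive σ ∧ (∀ a, σ a ≠ a) ∧ IsMonomialAlong σ G := by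
  choose τ hτ_unit hτ_zero using hG.exists_isUnit
  have hτ : Involutive τ := fun a => by
    by_contra hne
    have hzero : G (τ a) a = 0 := hτ_zero _ _ (Ne.symm hne)
    have hneg : G (τ a) a = -G a (τ a) := congrFun₂ hG.transpose_eq_neg a (τ a)
    exact (hτ_unit a).ne_zero (neg_eq_zero.1 (hneg.symm.trans hzero))
  refine ⟨hτ.toPerm, hτ, fun a (ha : τ a = a) => (hτ_unit a).ne_zero ?_, hτ_unit, hτ_zero _ _⟩
  rw [ha, hG.diag_eq_zero]

theorem IsAlternatingMonomial.isCongruent [Fintype ι] [DecidableEq ι]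
    (hG : IsAlternatingMonomial G) (hH : IsAlternatingMonomial H) : IsCongruent G H := by
  cases subsingleton_or_nontrivial R
  · exact ⟨1, isUnit_one, Subsingleton.elim _ _⟩
  obtain ⟨σ, hσ, hσ_ne, hGσ⟩ := hG.exists_isMonomialAlong
  obtain ⟨τ, hτ, hτ_ne, hHτ⟩ := hH.exists_isMonomialAlong
  obtain ⟨f, hf⟩ := isConj_iff.1 (isConj_of_involutive_of_forall_ne hτ hτ_ne hσ hσ_ne)
  have hτ_eq : f⁻¹ * σ * f = τ := by rw [← hf]; group
  have hGτ : IsMonomialAlong τ (G.submatrix f f) := hτ_eq ▸ hGσ.submatrix f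
  have hskew : (G.submatrix f f)ᵀ = -G.submatrix f f := by
    rw [transpose_submatrix, hG.transpose_eq_neg, submatrix_neg]
    rfl
  exact (isCongruent_submatrix G f).trans
    (hGτ.isCongruent hτ hτ_ne hskew hHτ hH.transpose_eq_neg)

end AlternatingMonomial

section StandardAlternating

variable (R : Type*) [CommRing R] (n : ℕ)

/-- The Gram matrix `Ω = [[0, J], [-J, 0]]` of the standard alternating pairing on `R ^ (2 * n)`.
With indices starting at `0`, its antidiagonal is `a + b + 1 = 2 * n`. -/
def standardAlternating : Matrix (Fin (2 * n)) (Fin (2 * n)) R :=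
  Matrix.of fun a b =>
    if (a : ℕ) + (b : ℕ) + 1 = 2 * n then (if (a : ℕ) < n then (1 : R) else -1) else 0

theorem isAlternatingMonomial_standardAlternating :
    IsAlternatingMonomial (standardAlternating R n) where
  transpose_eq_neg := by
    ext a b
    simp only [standardAlternating, transpose_apply, of_apply, Matrix.neg_apply]
    by_cases hab : (a : ℕ) + b + 1 = 2 * n
    · have hba : (b : ℕ) + a + 1 = 2 * n := by omega
      have hlt : (b : ℕ) < n ↔ ¬ (a : ℕ) < n := by omega
      simp only [if_pos hab, if_pos hba, hlt]
      split_ifs <;> simp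
    · have hba : (b : ℕ) + a + 1 ≠ 2 * n := by omega
      simp only [if_neg hab, if_neg hba, neg_zero]
  diag_eq_zero a := if_neg (by omega)
  exists_isUnit a := by
    refine ⟨a.rev, ?_, fun b hb => if_neg fun hab => hb (Fin.ext ?_)⟩
    · have hrev : (a : ℕ) + a.rev + 1 = 2 * n := by rw [Fin.val_rev]; omega
      simp only [standardAlternating, of_apply, if_pos hrev]
      split_ifs
      exacts [isUnit_one, isUnit_one.neg]
    · rw [Fin.val_rev]
      omega

end StandardAlternating

theorem alt_signed_perm_equiv_standard_general {R : Type*} [CommRing R] {n : ℕ}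
    {G : Matrix (Fin (2 * n)) (Fin (2 * n)) R} (hG : IsAlternatingMonomial G) :
    IsCongruent G (standardAlternating R n) :=
  hG.isCongruent (isAlternatingMonomial_standardAlternating R n)

/-- Let `R` be a commutative ring and let `m = 2n` be even.  Let `G ∈ Mat_m(R)` be an
invertible alternating matrix (`Gᵀ = −G` with zero diagonal) that is a signed permutation
matrix, i.e. each row of `G` has exactly one nonzero entry, and that entry equals `1` or
`−1`.  Then there exists `P ∈ GL_m(R)` with `Pᵀ G P = Ω_m`, where `Ω_m` is the standard
symplectic Gram matrix given in `n×n` blocks by `Ω_m = [[0, J_n], [−J_n, 0]]` with `J_n`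
the antidiagonal identity matrix. -/
theorem alt_signed_perm_equiv_standard {R : Type*} [CommRing R] {n : ℕ}
    (G : Matrix (Fin (2 * n)) (Fin (2 * n)) R)
    (halt : G.transpose = -G) (hdiag : ∀ a, G a a = 0) (hGunit : IsUnit G)
    (hsigned : ∀ r : Fin (2 * n), ∃ c : Fin (2 * n),
      (G r c = 1 ∨ G r c = -1) ∧ ∀ c' : Fin (2 * n), c' ≠ c → G r c' = 0) :
    ∃ P : Matrix (Fin (2 * n)) (Fin (2 * n)) R, IsUnit P ∧
      P.transpose * G * P =
        Matrix.of (fun a b : Fin (2 * n) =>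
          if (a : ℕ) + (b : ℕ) + 1 = 2 * n then (if (a : ℕ) < n then (1 : R) else -1)
          else 0) :=
  alt_signed_perm_equiv_standard_general ⟨halt, hdiag, fun r => (hsigned r).imp fun _ hc =>
    ⟨hc.1.elim (fun h => h ▸ isUnit_one) (fun h => h ▸ isUnit_one.neg), hc.2⟩⟩
end
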